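/- arXiv:1306.5880 — 4 statements merged into one kernel-verified Lean document; each statement's English description precedes it below -/
import Mathlib

section
/- Let p, q > 2 be real numbers and set α = 1/p, β = 1/q. Define four affine maps on (0,∞) × ℝ by T₀(s,t) = (p·s, p·t), T₁(s,t) = (p·s, p·t − p + 1), T′₀(s,t) = (s/q, t), T′₁(s,t) = (s/q, t + ((q−1)/q)·s). Then for every s > 0 and t ∈ ℝ, t ∈ C_α − s·C_β if and only if there exists a sequence (sₙ, tₙ)_{n≥0} in (0,∞) × ℝ with (s₀, t₀) = (s, t) such that for every n, (s_{n+1}, t_{n+1}) is the image of (sₙ, tₙ) under one of the four maps T₀, T₁, T′₀, T′₁, and the sequence lies in a compact subset of (0,∞) × ℝ (i.e., there are constants 0 < c ≤ C and M ≥ 0 with c ≤ sₙ ≤ C and |tₙ| ≤ M for all n). -/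
open Set

/-- The middle Cantor set `C_a`, for `0 < a < 1/2`:
`C_a = { (1-a) * ∑ εₖ aᵏ : εₖ ∈ {0,1} }`. -/
noncomputable def middleCantor (a : ℝ) : Set ℝ :=
  {x : ℝ | ∃ ε : ℕ → Bool, x = (1 - a) * ∑' k : ℕ, (if ε k then a ^ k else 0)}

/-- The arithmetic difference `C_a - l · C_b`. -/
noncomputable def diffSet (a b l : ℝ) : Set ℝ :=
  {z : ℝ | ∃ x ∈ middleCantor a, ∃ y ∈ middleCantor b, z = x - l * y}

/-!
Let `t = x - s y` with `x ∈ C_α` and `y ∈ C_β`. Expanding `x = α x'` or `x = α x' + (1 - α)` with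
`x' ∈ C_α` gives `t' ∈ C_α - s' C_β`, where `(s', t')` is the image of `(s, t)` under `T₀` or `T₁`;
expanding `y` instead gives `T'₀` or `T'₁`.

If `t ∈ C_α - s C_β`, expand `x` when `s < 1` and `y` when `1 ≤ s`: this keeps `s` in a compact
subset of `(0, ∞)`, and then `t ∈ C_α - s C_β` keeps `t` bounded.

Conversely, let `D` be the distance from `t` to `C_α - s C_β`. A `T` step multiplies `s` by `p` and
`D` by at least `p`, a `T'` step divides `s` by `q` and does not decrease `D`, so every step
multiplies `D ^ 2 / s` by at least `min p q > 1`. This quantity is bounded along an orbit that stays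
in a compact set, hence vanishes at its start, and `C_α - s C_β` is closed.
-/

theorem middleCantor_eq_range (a : ℝ) :
    middleCantor a = range fun ε ↦ (1 - a) * Cardinal.cantorFunction a ε := by
  ext x
  simp only [middleCantor, Cardinal.cantorFunction, Cardinal.cantorFunctionAux, mem_ofPred_eq,
    mem_range, Bool.cond_eq_ite, eq_comm]

theorem zero_mem_middleCantor (a : ℝ) : 0 ∈ middleCantor a :=
  ⟨fun _ ↦ false, by simp⟩

theorem cantorFunction_cons {a : ℝ} (ha : a ∈ Ico 0 1) (d : Bool) (ε : ℕ → Bool) :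
    Cardinal.cantorFunction a (fun k ↦ Nat.casesOn k d ε) =
      cond d 1 0 + a * Cardinal.cantorFunction a ε :=
  Cardinal.cantorFunction_succ _ ha.1 ha.2

theorem mem_middleCantor_iff {a x : ℝ} (ha : a ∈ Ico 0 1) :
    x ∈ middleCantor a ↔ ∃ x' ∈ middleCantor a, x = a * x' ∨ x = a * x' + (1 - a) := by
  simp only [middleCantor_eq_range, mem_range, exists_exists_eq_and]
  constructor
  · rintro ⟨ε, rfl⟩
    refine ⟨fun k ↦ ε (k + 1), ?_⟩
    rw [Cardinal.cantorFunction_succ ε ha.1 ha.2]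
    cases ε 0
    · left
      rw [cond_false]
      ring
    · right
      rw [cond_true]
      ring
  · rintro ⟨ε, rfl | rfl⟩
    · refine ⟨fun k ↦ Nat.casesOn k false ε, ?_⟩
      rw [cantorFunction_cons ha, cond_false]
      ring
    · refine ⟨fun k ↦ Nat.casesOn k true ε, ?_⟩
      rw [cantorFunction_cons ha, cond_true]
      ring

theorem middleCantor_subset_Icc {a : ℝ} (ha : a ∈ Ico 0 1) : middleCantor a ⊆ Icc 0 1 := by
  rw [middleCantor_eq_range]
  rintro _ ⟨ε, rfl⟩
  have one_sub_pos : 0 < 1 - a := sub_pos.2 ha.2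
  have nonneg : 0 ≤ Cardinal.cantorFunction a ε :=
    tsum_nonneg fun _ ↦ Cardinal.cantorFunctionAux_nonneg ha.1
  have le_inv : Cardinal.cantorFunction a ε ≤ (1 - a)⁻¹ := by
    calc
      Cardinal.cantorFunction a ε ≤ Cardinal.cantorFunction a fun _ ↦ true :=
        Cardinal.cantorFunction_le ha.1 ha.2 fun _ _ ↦ rfl
      _ = (1 - a)⁻¹ := by
        simpa [Cardinal.cantorFunction, Cardinal.cantorFunctionAux] using
          tsum_geometric_of_lt_one ha.1 ha.2
  exact ⟨mul_nonneg one_sub_pos.le nonneg,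
    (mul_le_mul_of_nonneg_left le_inv one_sub_pos.le).trans_eq (mul_inv_cancel₀ one_sub_pos.ne')⟩

theorem continuous_cantorFunction {a : ℝ} (ha : |a| < 1) :
    Continuous (Cardinal.cantorFunction a) := by
  refine continuous_tsum (fun k ↦ ?_) (summable_geometric_of_lt_one (abs_nonneg a) ha) fun k ε ↦ ?_
  · exact (continuous_of_discreteTopology (f := fun d : Bool ↦ cond d (a ^ k) 0)).comp
      (continuous_apply k)
  · cases h : ε k <;> simp [Cardinal.cantorFunctionAux, h]

theorem isCompact_middleCantor {a : ℝ} (ha : |a| < 1) : IsCompact (middleCantor a) := by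
  rw [middleCantor_eq_range]
  exact isCompact_range (continuous_const.mul (continuous_cantorFunction ha))

theorem diffSet_eq_image_prod (a b l : ℝ) :
    diffSet a b l = (fun z : ℝ × ℝ ↦ z.1 - l * z.2) '' (middleCantor a ×ˢ middleCantor b) := by
  ext z
  simp only [diffSet, mem_ofPred_eq, mem_image, Prod.exists, mem_prod]
  grind

theorem isCompact_diffSet {a b : ℝ} (ha : |a| < 1) (hb : |b| < 1) (l : ℝ) :
    IsCompact (diffSet a b l) := by
  rw [diffSet_eq_image_prod]
  exact ((isCompact_middleCantor ha).prod (isCompact_middleCantor hb)).image (by fun_prop)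

theorem zero_mem_diffSet (a b l : ℝ) : 0 ∈ diffSet a b l :=
  ⟨0, zero_mem_middleCantor a, 0, zero_mem_middleCantor b, by simp⟩

theorem diffSet_subset_Icc {a b l : ℝ} (ha : a ∈ Ico 0 1) (hb : b ∈ Ico 0 1) (hl : 0 ≤ l) :
    diffSet a b l ⊆ Icc (-l) 1 := by
  rintro _ ⟨x, hx, y, hy, rfl⟩
  obtain ⟨hx₀, hx₁⟩ := middleCantor_subset_Icc ha hx
  obtain ⟨hy₀, hy₁⟩ := middleCantor_subset_Icc hb hy
  have := mul_nonneg hl hy₀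
  have := mul_le_of_le_one_right hl hy₁
  constructor <;> linarith

theorem one_div_mem_Ico {K : Type*} [Field K] [LinearOrder K] [IsStrictOrderedRing K] {p : K}
    (hp : 1 < p) : 1 / p ∈ Ico 0 1 :=
  have hp₀ : 0 < p := one_pos.trans hp
  ⟨(one_div_pos.2 hp₀).le, (div_lt_one hp₀).2 hp⟩

theorem abs_one_div_lt_one {K : Type*} [Field K] [LinearOrder K] [IsStrictOrderedRing K] {p : K}
    (hp : 1 < p) : |1 / p| < 1 :=
  (abs_of_nonneg (one_div_mem_Ico hp).1).trans_lt (one_div_mem_Ico hp).2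

theorem mem_diffSet_one_div_left_iff {p b s t : ℝ} (hp : 1 < p) :
    t ∈ diffSet (1 / p) b s ↔
      p * t ∈ diffSet (1 / p) b (p * s) ∨ p * t - p + 1 ∈ diffSet (1 / p) b (p * s) := by
  have : 0 < p := one_pos.trans hp
  have mem_iff (x : ℝ) := mem_middleCantor_iff (x := x) (one_div_mem_Ico hp)
  constructor
  · rintro ⟨x, hx, y, hy, rfl⟩
    obtain ⟨x', hx', rfl | rfl⟩ := (mem_iff x).1 hx
    · exact .inl ⟨x', hx', y, hy, by field_simp⟩
    · exact .inr ⟨x', hx', y, hy, by field_simp; ring⟩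
  · rintro (⟨x', hx', y, hy, h⟩ | ⟨x', hx', y, hy, h⟩)
    · refine ⟨_, (mem_iff _).2 ⟨x', hx', .inl rfl⟩, y, hy, ?_⟩
      field_simp
      linarith
    · refine ⟨_, (mem_iff _).2 ⟨x', hx', .inr rfl⟩, y, hy, ?_⟩
      field_simp
      linarith

theorem mem_diffSet_one_div_right_iff {a q s t : ℝ} (hq : 1 < q) :
    t ∈ diffSet a (1 / q) s ↔
      t ∈ diffSet a (1 / q) (s / q) ∨ t + (q - 1) / q * s ∈ diffSet a (1 / q) (s / q) := by
  have : 0 < q := one_pos.trans hq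
  have mem_iff (y : ℝ) := mem_middleCantor_iff (x := y) (one_div_mem_Ico hq)
  constructor
  · rintro ⟨x, hx, y, hy, rfl⟩
    obtain ⟨y', hy', rfl | rfl⟩ := (mem_iff y).1 hy
    · exact .inl ⟨x, hx, y', hy', by field_simp⟩
    · exact .inr ⟨x, hx, y', hy', by field_simp; ring⟩
  · rintro (⟨x, hx, y', hy', h⟩ | ⟨x, hx, y', hy', h⟩)
    · refine ⟨x, hx, _, (mem_iff _).2 ⟨y', hy', .inl rfl⟩, ?_⟩
      rw [h]
      ring
    · refine ⟨x, hx, _, (mem_iff _).2 ⟨y', hy', .inr rfl⟩, ?_⟩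
      rw [eq_sub_of_add_eq h]
      field_simp
      ring

/-- One step of the renormalization dynamics: `w` is the image of `z` under one of the four maps
`T₀, T₁, T'₀, T'₁`, listed in this order. -/
def IsRenormStep (p q : ℝ) (z w : ℝ × ℝ) : Prop :=
  w = (p * z.1, p * z.2) ∨
  w = (p * z.1, p * z.2 - p + 1) ∨
  w = (z.1 / q, z.2) ∨
  w = (z.1 / q, z.2 + ((q - 1) / q) * z.1)

theorem exists_isRenormStep_left {p q s t : ℝ} (hp : 1 < p) (ht : t ∈ diffSet (1 / p) (1 / q) s) :
    ∃ t' ∈ diffSet (1 / p) (1 / q) (p * s), IsRenormStep p q (s, t) (p * s, t') := by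
  rcases (mem_diffSet_one_div_left_iff hp).1 ht with h | h
  · exact ⟨_, h, .inl rfl⟩
  · exact ⟨_, h, .inr (.inl rfl)⟩

theorem exists_isRenormStep_right {p q s t : ℝ} (hq : 1 < q)
    (ht : t ∈ diffSet (1 / p) (1 / q) s) :
    ∃ t' ∈ diffSet (1 / p) (1 / q) (s / q), IsRenormStep p q (s, t) (s / q, t') := by
  rcases (mem_diffSet_one_div_right_iff hq).1 ht with h | h
  · exact ⟨_, h, .inr (.inr (.inl rfl))⟩
  · exact ⟨_, h, .inr (.inr (.inr rfl))⟩

/-- The points `(s, t)` with `s ∈ [c, C]` and `t ∈ C_{1/p} - s C_{1/q}`. For suitable `c` and `C`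
the orbit of such a point can be continued inside this set forever. -/
def renormBand (p q c C : ℝ) : Set (ℝ × ℝ) :=
  {z | z.1 ∈ Icc c C ∧ z.2 ∈ diffSet (1 / p) (1 / q) z.1}

theorem exists_isRenormStep_mem_renormBand {p q c C : ℝ} (hp : 1 < p) (hq : 1 < q) (hc : 0 ≤ c)
    (hcq : c ≤ 1 / q) (hpC : p ≤ C) {z : ℝ × ℝ} (hz : z ∈ renormBand p q c C) :
    ∃ w ∈ renormBand p q c C, IsRenormStep p q z w := by
  obtain ⟨s, t⟩ := z
  obtain ⟨⟨hcs : c ≤ s, hsC : s ≤ C⟩, ht : t ∈ diffSet (1 / p) (1 / q) s⟩ := hz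
  rcases lt_or_ge s 1 with hs | hs
  · obtain ⟨t', ht', hstep⟩ := exists_isRenormStep_left hp ht
    have lower : c ≤ p * s := hcs.trans (le_mul_of_one_le_left (hc.trans hcs) hp.le)
    have upper : p * s ≤ C := (mul_le_of_le_one_right (by linarith) hs.le).trans hpC
    exact ⟨(p * s, t'), ⟨⟨lower, upper⟩, ht'⟩, hstep⟩
  · obtain ⟨t', ht', hstep⟩ := exists_isRenormStep_right hq ht
    have lower : c ≤ s / q := hcq.trans (by gcongr)
    have upper : s / q ≤ C := (div_le_self (by linarith) hq.le).trans hsC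
    exact ⟨(s / q, t'), ⟨⟨lower, upper⟩, ht'⟩, hstep⟩

theorem exists_seq_mem_of_forall_exists {α : Type*} {A : Set α} {r : α → α → Prop} {x : α}
    (hx : x ∈ A) (h : ∀ y ∈ A, ∃ z ∈ A, r y z) :
    ∃ u : ℕ → α, u 0 = x ∧ (∀ n, r (u n) (u (n + 1))) ∧ ∀ n, u n ∈ A := by
  choose! f f_mem hf using h
  have mem (n : ℕ) : f^[n] x ∈ A := MapsTo.iterate f_mem n hx
  refine ⟨fun n ↦ f^[n] x, rfl, fun n ↦ ?_, mem⟩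
  simpa only [Function.iterate_succ_apply'] using hf _ (mem n)

theorem exists_orbit_mem_renormBand {p q s t : ℝ} (hp : 1 < p) (hq : 1 < q) (hs : 0 ≤ s)
    (ht : t ∈ diffSet (1 / p) (1 / q) s) :
    ∃ z : ℕ → ℝ × ℝ, z 0 = (s, t) ∧ (∀ n, IsRenormStep p q (z n) (z (n + 1))) ∧
      ∀ n, z n ∈ renormBand p q (min s (1 / q)) (max s p) := by
  have hc : 0 ≤ min s (1 / q) := le_min hs (one_div_mem_Ico hq).1
  exact exists_seq_mem_of_forall_exists ⟨⟨min_le_left _ _, le_max_left _ _⟩, ht⟩ fun _ ↦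
    exists_isRenormStep_mem_renormBand hp hq hc (min_le_right _ _) (le_max_right _ _)

theorem abs_snd_le_of_mem_renormBand {p q c C : ℝ} (hp : 1 < p) (hq : 1 < q) (hc : 0 ≤ c)
    {z : ℝ × ℝ} (hz : z ∈ renormBand p q c C) : |z.2| ≤ max C 1 := by
  obtain ⟨hlower, hupper⟩ := diffSet_subset_Icc (one_div_mem_Ico hp) (one_div_mem_Ico hq)
    (hc.trans hz.1.1) hz.2
  exact abs_le'.2 ⟨hupper.trans (le_max_right _ _),
    (neg_le.1 hlower).trans (hz.1.2.trans (le_max_left _ _))⟩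

theorem mul_infDist_le_infDist_of_affine {f : ℝ → ℝ} {k d : ℝ} (hk : 0 < k)
    (hf : ∀ x, f x = k * x + d) {S U : Set ℝ} (hU : U.Nonempty) (h : f ⁻¹' U ⊆ S) (x : ℝ) :
    k * Metric.infDist x S ≤ Metric.infDist (f x) U := by
  refine (Metric.le_infDist hU).2 fun u hu ↦ ?_
  obtain ⟨v, rfl⟩ : ∃ v, f v = u := ⟨(u - d) / k, by rw [hf]; field_simp; ring⟩
  calc
    k * Metric.infDist x S ≤ k * dist x v := by
      gcongr
      exact Metric.infDist_le_dist_of_mem (h hu)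
    _ = dist (f x) (f v) := by
      rw [hf, hf, dist_add_right, Real.dist_eq, Real.dist_eq, ← mul_sub, abs_mul, abs_of_pos hk]

/-- The distance from `t` to `C_{1/p} - s C_{1/q}` at a point `(s, t)`. -/
noncomputable def diffSetDist (p q : ℝ) (z : ℝ × ℝ) : ℝ :=
  Metric.infDist z.2 (diffSet (1 / p) (1 / q) z.1)

theorem diffSetDist_nonneg (p q : ℝ) (z : ℝ × ℝ) : 0 ≤ diffSetDist p q z :=
  Metric.infDist_nonneg

theorem diffSetDist_le_abs (p q : ℝ) (z : ℝ × ℝ) : diffSetDist p q z ≤ |z.2| :=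
  (Metric.infDist_le_dist_of_mem (zero_mem_diffSet _ _ _)).trans_eq (Real.dist_0_eq_abs z.2)

theorem diffSetDist_eq_zero_iff {p q : ℝ} (hp : 1 < p) (hq : 1 < q) {z : ℝ × ℝ} :
    diffSetDist p q z = 0 ↔ z.2 ∈ diffSet (1 / p) (1 / q) z.1 := by
  have closed := (isCompact_diffSet (abs_one_div_lt_one hp) (abs_one_div_lt_one hq) z.1).isClosed
  exact (closed.mem_iff_infDist_zero ⟨0, zero_mem_diffSet _ _ _⟩).symm

theorem IsRenormStep.diffSetDist_le {p q : ℝ} (hp : 1 < p) (hq : 1 < q) {z w : ℝ × ℝ}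
    (h : IsRenormStep p q z w) :
    (w.1 = p * z.1 ∧ p * diffSetDist p q z ≤ diffSetDist p q w) ∨
      (w.1 = z.1 / q ∧ diffSetDist p q z ≤ diffSetDist p q w) := by
  have nonempty (s : ℝ) : (diffSet (1 / p) (1 / q) s).Nonempty := ⟨0, zero_mem_diffSet _ _ _⟩
  have expand_left (f : ℝ → ℝ) {d : ℝ} (hf : ∀ t, f t = p * t + d)
      (h : f ⁻¹' diffSet (1 / p) (1 / q) (p * z.1) ⊆ diffSet (1 / p) (1 / q) z.1) :
      p * diffSetDist p q z ≤ diffSetDist p q (p * z.1, f z.2) :=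
    mul_infDist_le_infDist_of_affine (one_pos.trans hp) hf (nonempty _) h z.2
  have expand_right (f : ℝ → ℝ) {d : ℝ} (hf : ∀ t, f t = t + d)
      (h : f ⁻¹' diffSet (1 / p) (1 / q) (z.1 / q) ⊆ diffSet (1 / p) (1 / q) z.1) :
      diffSetDist p q z ≤ diffSetDist p q (z.1 / q, f z.2) := by
    simpa only [one_mul, diffSetDist] using
      mul_infDist_le_infDist_of_affine one_pos (by simpa only [one_mul]) (nonempty _) h z.2
  rcases h with rfl | rfl | rfl | rfl
  · exact .inl ⟨rfl, expand_left (fun t ↦ p * t) (fun t ↦ (add_zero _).symm) fun t ht ↦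
      (mem_diffSet_one_div_left_iff hp).2 (.inl ht)⟩
  · exact .inl ⟨rfl, expand_left (fun t ↦ p * t - p + 1) (d := 1 - p) (fun t ↦ by ring)
      fun t ht ↦ (mem_diffSet_one_div_left_iff hp).2 (.inr ht)⟩
  · exact .inr ⟨rfl, expand_right (fun t ↦ t) (fun t ↦ (add_zero t).symm) fun t ht ↦
      (mem_diffSet_one_div_right_iff hq).2 (.inl ht)⟩
  · exact .inr ⟨rfl, expand_right (fun t ↦ t + (q - 1) / q * z.1) (fun _ ↦ rfl) fun t ht ↦
      (mem_diffSet_one_div_right_iff hq).2 (.inr ht)⟩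

theorem IsRenormStep.min_mul_diffSetDist_sq_div_le {p q : ℝ} (hp : 1 < p) (hq : 1 < q) {z w : ℝ × ℝ}
    (hz : 0 < z.1) (h : IsRenormStep p q z w) :
    min p q * (diffSetDist p q z ^ 2 / z.1) ≤ diffSetDist p q w ^ 2 / w.1 := by
  have : 0 < p := one_pos.trans hp
  have : 0 < q := one_pos.trans hq
  have := diffSetDist_nonneg p q z
  rcases h.diffSetDist_le hp hq with ⟨hs, hD⟩ | ⟨hs, hD⟩
  · calc
      min p q * (diffSetDist p q z ^ 2 / z.1) ≤ p * (diffSetDist p q z ^ 2 / z.1) := by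
        gcongr
        exact min_le_left p q
      _ = (p * diffSetDist p q z) ^ 2 / w.1 := by rw [hs]; field_simp
      _ ≤ diffSetDist p q w ^ 2 / w.1 := by rw [hs]; gcongr
  · calc
      min p q * (diffSetDist p q z ^ 2 / z.1) ≤ q * (diffSetDist p q z ^ 2 / z.1) := by
        gcongr
        exact min_le_right p q
      _ = diffSetDist p q z ^ 2 / w.1 := by rw [hs]; field_simp
      _ ≤ diffSetDist p q w ^ 2 / w.1 := by rw [hs]; gcongr

theorem nonpos_of_forall_mul_le_succ {e : ℕ → ℝ} {r B : ℝ} (hr : 1 < r)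
    (he : ∀ n, r * e n ≤ e (n + 1)) (hB : ∀ n, e n ≤ B) : e 0 ≤ 0 := by
  by_contra! hpos
  obtain ⟨n, hn⟩ := pow_unbounded_of_one_lt (B / e 0) hr
  have growth : r ^ n * e 0 ≤ e n := geom_le (one_pos.trans hr).le n fun k _ ↦ he k
  exact ((div_lt_iff₀ hpos).1 hn).not_ge (growth.trans (hB n))

theorem snd_mem_diffSet_of_bounded_orbit {p q c M : ℝ} (hp : 1 < p) (hq : 1 < q) (hc : 0 < c)
    {z : ℕ → ℝ × ℝ} (hz : ∀ n, IsRenormStep p q (z n) (z (n + 1))) (hfst : ∀ n, c ≤ (z n).1)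
    (hsnd : ∀ n, |(z n).2| ≤ M) : (z 0).2 ∈ diffSet (1 / p) (1 / q) (z 0).1 := by
  have fst_pos (n : ℕ) : 0 < (z n).1 := hc.trans_le (hfst n)
  have bounded (n : ℕ) : diffSetDist p q (z n) ^ 2 / (z n).1 ≤ M ^ 2 / c := by
    have := diffSetDist_nonneg p q (z n)
    gcongr
    · exact (diffSetDist_le_abs p q (z n)).trans (hsnd n)
    · exact hfst n
  have nonpos : diffSetDist p q (z 0) ^ 2 / (z 0).1 ≤ 0 :=
    nonpos_of_forall_mul_le_succ (e := fun n ↦ diffSetDist p q (z n) ^ 2 / (z n).1)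
      (lt_min hp hq) (fun n ↦ (hz n).min_mul_diffSetDist_sq_div_le hp hq (fst_pos n)) bounded
  rw [← diffSetDist_eq_zero_iff hp hq, ← sq_nonpos_iff]
  simpa using (div_le_iff₀ (fst_pos 0)).1 nonpos

theorem stmt0_general (p q : ℝ) (hp : 1 < p) (hq : 1 < q) (s t : ℝ) (hs : 0 < s) :
    t ∈ diffSet (1 / p) (1 / q) s ↔
      ∃ z : ℕ → ℝ × ℝ,
        z 0 = (s, t) ∧
        (∀ n : ℕ, IsRenormStep p q (z n) (z (n + 1))) ∧
        ∃ c C M : ℝ, 0 < c ∧ c ≤ C ∧ 0 ≤ M ∧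
          ∀ n : ℕ, c ≤ (z n).1 ∧ (z n).1 ≤ C ∧ |(z n).2| ≤ M := by
  constructor
  · intro ht
    obtain ⟨z, hz₀, hz, hband⟩ := exists_orbit_mem_renormBand hp hq hs.le ht
    have hc : 0 < min s (1 / q) := lt_min hs (one_div_pos.2 (one_pos.trans hq))
    exact ⟨z, hz₀, hz, min s (1 / q), max s p, max (max s p) 1, hc,
      (min_le_left _ _).trans (le_max_left _ _), zero_le_one.trans (le_max_right _ _), fun n ↦
        ⟨(hband n).1.1, (hband n).1.2, abs_snd_le_of_mem_renormBand hp hq hc.le (hband n)⟩⟩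
  · rintro ⟨z, hz₀, hz, c, C, M, hc, -, -, hbound⟩
    simpa [hz₀] using snd_mem_diffSet_of_bounded_orbit hp hq hc hz (fun n ↦ (hbound n).1)
      fun n ↦ (hbound n).2.2

theorem stmt0 (p q : ℝ) (hp : 2 < p) (hq : 2 < q) (s t : ℝ) (hs : 0 < s) :
    t ∈ diffSet (1 / p) (1 / q) s ↔
      ∃ z : ℕ → ℝ × ℝ,
        z 0 = (s, t) ∧
        (∀ n : ℕ,
          z (n + 1) = (p * (z n).1, p * (z n).2) ∨
          z (n + 1) = (p * (z n).1, p * (z n).2 - p + 1) ∨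
          z (n + 1) = ((z n).1 / q, (z n).2) ∨
          z (n + 1) = ((z n).1 / q, (z n).2 + ((q - 1) / q) * (z n).1)) ∧
        ∃ c C M : ℝ, 0 < c ∧ c ≤ C ∧ 0 ≤ M ∧
          ∀ n : ℕ, c ≤ (z n).1 ∧ (z n).1 ≤ C ∧ |(z n).2| ≤ M :=
  stmt0_general p q (one_lt_two.trans hp) (one_lt_two.trans hq) s t hs
end

section
/- Let p, q > 2 be real numbers with log p / log q = n₀/m₀ where n₀, m₀ are coprime positive integers (so that p^{m₀} = q^{n₀}), set α = 1/p, β = 1/q, and let λ be a nonzero real number. For each a = (a₀,…,a_{m₀−1}) ∈ {0,1}^{m₀} and b = (b₀,…,b_{n₀−1}) ∈ {0,1}^{n₀}, set a_λ(a,b) := −(p−1)·p^{m₀−1}·( ∑_{k=0}^{m₀−1} a_k·p^{−k} − (p(q−1))/(q(p−1)) · λ · ∑_{k=0}^{n₀−1} b_k·q^{−k} ), and define the contraction S_{a,b}(t) := p^{−m₀}·(t − a_λ(a,b)). Then C_α − λ·C_β is the attractor of the iterated function system {S_{a,b}}: it is the unique nonempty compact subset D of ℝ satisfying D = ⋃_{a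 ∈ {0,1}^{m₀}, b ∈ {0,1}^{n₀}} S_{a,b}(D). -/
/-!
A point of `C_α` is a series `(1 - α) ∑ εₖ αᵏ`. Cutting `ε` after its first `m₀` digits writes the
point as `(1 - α) ∑_{k < m₀} εₖ αᵏ + α ^ m₀ x'`, where `x' ∈ C_α` has the remaining digits. Do this
with `m₀` digits in `C_α` and `n₀` digits in `C_β`: since `p ^ m₀ = q ^ n₀` the two ratios agree,
and `x - λ y` becomes an affine function of `x' - λ y'`, namely `S_{a,b}` for the leading blocks
`a`, `b`. As blocks and tails can be joined arbitrarily, `C_α - λ C_β` is self-similar.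

For uniqueness, let `K` and `L` both be invariant. The point of `K` farthest from `L` is the image
of a point of `K` under a map that preserves `L` and shrinks the distance to it by a factor
`r < 1`, so the largest distance is zero.
-/

open Set

/-- The translation part
`a_λ(a,b) = -(p-1) p^(m₀-1) (∑ aₖ p^(-k) - (p(q-1))/(q(p-1)) · λ · ∑ bₖ q^(-k))`. -/
noncomputable def coeffA (p q l : ℝ) (m₀ n₀ : ℕ)
    (a : Fin m₀ → Bool) (b : Fin n₀ → Bool) : ℝ :=
  -(p - 1) * p ^ (m₀ - 1) *
    ((∑ k : Fin m₀, (if a k then (1 : ℝ) else 0) / p ^ (k : ℕ)) -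
      (p * (q - 1)) / (q * (p - 1)) * l *
        ∑ k : Fin n₀, (if b k then (1 : ℝ) else 0) / q ^ (k : ℕ))

/-- The contraction `S_{a,b}(t) = p^(-m₀) (t - a_λ(a,b))`. -/
noncomputable def contraction (p q l : ℝ) (m₀ n₀ : ℕ)
    (a : Fin m₀ → Bool) (b : Fin n₀ → Bool) (t : ℝ) : ℝ :=
  (p ^ m₀)⁻¹ * (t - coeffA p q l m₀ n₀ a b)

open Metric
open scoped NNReal

section IteratedFunctionSystem

variable {X Ω ι : Type*}

/-- `K` is an attractor of the (possibly infinite) iterated function system `f`: a nonempty compact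
set that is the union of its images. The notion is used for contractions, where `K` is unique
(`IsAttractor.eq`). -/
structure IsAttractor [TopologicalSpace X] (f : ι → X → X) (K : Set X) : Prop where
  nonempty : K.Nonempty
  isCompact : IsCompact K
  eq_iUnion_image : K = ⋃ i, f i '' K

lemma range_eq_iUnion_image_range {F : Ω → X} {f : ι → X → X} {cut : Ω → ι × Ω}
    (hcut : cut.Surjective) (hF : ∀ ω, f (cut ω).1 (F (cut ω).2) = F ω) :
    range F = ⋃ i, f i '' range F := by
  have factor : F = (fun w : ι × Ω ↦ f w.1 (F w.2)) ∘ cut := funext fun ω ↦ (hF ω).symm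
  calc range F = range fun w : ι × Ω ↦ f w.1 (F w.2) := by
        conv_lhs => rw [factor, hcut.range_comp]
    _ = ⋃ i, f i '' range F := by
        ext x
        simp only [mem_range, Prod.exists, mem_iUnion, mem_image, exists_exists_eq_and]

lemma isAttractor_range [TopologicalSpace X] [TopologicalSpace Ω] [CompactSpace Ω] [Nonempty Ω]
    {F : Ω → X} (hFc : Continuous F) {f : ι → X → X} {cut : Ω → ι × Ω}
    (hcut : cut.Surjective) (hF : ∀ ω, f (cut ω).1 (F (cut ω).2) = F ω) :
    IsAttractor f (range F) :=
  ⟨range_nonempty F, isCompact_range hFc, range_eq_iUnion_image_range hcut hF⟩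

lemma infDist_map_le_mul_infDist {Y : Type*} [PseudoMetricSpace X] [PseudoMetricSpace Y]
    {f : X → Y} {r : ℝ≥0} (hf : LipschitzWith r f) {s : Set X} {t : Set Y} (hs : s.Nonempty)
    (hst : MapsTo f s t) (x : X) : infDist (f x) t ≤ r * infDist x s := by
  have := hs.to_subtype
  rw [infDist_eq_iInf (s := s), Real.mul_iInf_of_nonneg r.coe_nonneg]
  exact le_ciInf fun y ↦ (infDist_le_dist_of_mem (hst y.2)).trans (hf.dist_le_mul x y)

lemma subset_of_subset_iUnion_image [MetricSpace X] {f : ι → X → X} {r : ℝ≥0}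
    (hf : ∀ i, ContractingWith r (f i)) {K L : Set X} (hK : IsCompact K) (hL : IsClosed L)
    (hL₀ : L.Nonempty) (hKf : K ⊆ ⋃ i, f i '' K) (hLf : ∀ i, MapsTo (f i) L L) : K ⊆ L := by
  intro x hx
  obtain ⟨y, hy, farthest⟩ := hK.exists_isMaxOn ⟨x, hx⟩ (continuous_infDist_pt L).continuousOn
  obtain ⟨i, z, hz, rfl⟩ := mem_iUnion.1 (hKf hy)
  have shrink : infDist (f i z) L ≤ r * infDist (f i z) L :=
    (infDist_map_le_mul_infDist (hf i).toLipschitzWith hL₀ (hLf i) z).trans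
      (mul_le_mul_of_nonneg_left (farthest hz) r.coe_nonneg)
  have hr : (r : ℝ) < 1 := (hf i).1
  have max_nonpos : infDist (f i z) L ≤ 0 :=
    not_lt.1 fun pos ↦ (mul_lt_of_lt_one_left pos hr).not_ge shrink
  rw [hL.mem_iff_infDist_zero hL₀]
  exact le_antisymm ((farthest hx).trans max_nonpos) infDist_nonneg

namespace IsAttractor

lemma mapsTo [TopologicalSpace X] {f : ι → X → X} {K : Set X} (hK : IsAttractor f K) (i : ι) :
    MapsTo (f i) K K := fun x hx ↦ by
  rw [hK.eq_iUnion_image]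
  exact mem_iUnion_of_mem i (mem_image_of_mem _ hx)

variable [MetricSpace X] {f : ι → X → X} {r : ℝ≥0} {K L : Set X}

lemma subset (hK : IsAttractor f K) (hL : IsAttractor f L)
    (hf : ∀ i, ContractingWith r (f i)) : K ⊆ L :=
  subset_of_subset_iUnion_image hf hK.isCompact hL.isCompact.isClosed hL.nonempty
    hK.eq_iUnion_image.subset hL.mapsTo

theorem eq (hK : IsAttractor f K) (hL : IsAttractor f L) (hf : ∀ i, ContractingWith r (f i)) :
    K = L :=
  (hK.subset hL hf).antisymm (hL.subset hK hf)

end IsAttractor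

end IteratedFunctionSystem

/-- The leading block of length `m` of a sequence, together with the remaining sequence; the latter
is indexed from `0` again, so that it codes a point of the same Cantor set. -/
def cutAt {X : Type*} (m : ℕ) (ε : ℕ → X) : (Fin m → X) × (ℕ → X) :=
  (fun k ↦ ε k, fun k ↦ ε (k + m))

lemma cutAt_surjective {X : Type*} (m : ℕ) : (cutAt (X := X) m).Surjective := by
  rintro ⟨a, τ⟩
  refine ⟨fun k ↦ if h : k < m then a ⟨k, h⟩ else τ (k - m), ?_⟩
  simp [cutAt]

/-- The point of `C_a` with digit sequence `ε`, a parametrization of `C_a` by the compact space of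
Boolean sequences. -/
noncomputable def cantorPoint (a : ℝ) (ε : ℕ → Bool) : ℝ :=
  (1 - a) * ∑' k : ℕ, (if ε k then a ^ k else 0)

lemma diffSet_eq_range (a b l : ℝ) :
    diffSet a b l =
      range fun ω : (ℕ → Bool) × (ℕ → Bool) ↦ cantorPoint a ω.1 - l * cantorPoint b ω.2 := by
  ext z
  constructor
  · rintro ⟨_, ⟨ε, rfl⟩, _, ⟨δ, rfl⟩, rfl⟩
    exact ⟨(ε, δ), rfl⟩
  · rintro ⟨⟨ε, δ⟩, rfl⟩
    exact ⟨_, ⟨ε, rfl⟩, _, ⟨δ, rfl⟩, rfl⟩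

lemma norm_digit_le (a : ℝ) (d : Bool) (k : ℕ) : ‖(if d then a ^ k else 0 : ℝ)‖ ≤ |a| ^ k := by
  cases d <;> simp

section AbsLtOne

variable {a : ℝ}

lemma summable_digits (ha : |a| < 1) (ε : ℕ → Bool) :
    Summable fun k ↦ (if ε k then a ^ k else 0 : ℝ) :=
  .of_norm_bounded (summable_geometric_of_lt_one (abs_nonneg a) ha) fun k ↦ norm_digit_le a (ε k) k

lemma continuous_cantorPoint (ha : |a| < 1) : Continuous (cantorPoint a) := by
  have continuous_digit (k : ℕ) : Continuous fun ε : ℕ → Bool ↦ (if ε k then a ^ k else 0 : ℝ) :=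
    (continuous_of_discreteTopology (f := fun d : Bool ↦ (if d then a ^ k else 0 : ℝ))).comp
      (continuous_apply k)
  exact continuous_const.mul (continuous_tsum continuous_digit
    (summable_geometric_of_lt_one (abs_nonneg a) ha) fun k ε ↦ norm_digit_le a (ε k) k)

lemma cantorPoint_eq_add_cantorPoint_cutAt (ha : |a| < 1) (m : ℕ) (ε : ℕ → Bool) :
    cantorPoint a ε =
      (1 - a) * ∑ k : Fin m, (if (cutAt m ε).1 k then a ^ (k : ℕ) else 0) +
        a ^ m * cantorPoint a (cutAt m ε).2 := by
  have head : ∑ k : Fin m, (if (cutAt m ε).1 k then a ^ (k : ℕ) else 0) =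
      ∑ k ∈ Finset.range m, (if ε k then a ^ k else 0) :=
    Fin.sum_univ_eq_sum_range (fun k ↦ if ε k then a ^ k else 0) m
  have tail : ∑' k, (if ε (k + m) then a ^ (k + m) else 0) =
      a ^ m * ∑' k, (if ε (k + m) then a ^ k else 0) := by
    rw [← tsum_mul_left]
    exact tsum_congr fun k ↦ by rw [mul_ite, mul_zero, pow_add, mul_comm]
  calc cantorPoint a ε
      = (1 - a) * (∑ k ∈ Finset.range m, (if ε k then a ^ k else 0) +
          ∑' k, (if ε (k + m) then a ^ (k + m) else 0)) := by
        rw [(summable_digits ha ε).sum_add_tsum_nat_add m, cantorPoint]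
    _ = (1 - a) * ∑ k : Fin m, (if (cutAt m ε).1 k then a ^ (k : ℕ) else 0) +
          a ^ m * cantorPoint a (cutAt m ε).2 := by
        rw [head, tail, cantorPoint, cutAt]
        ring

end AbsLtOne

section Contraction

variable {p q : ℝ} (l : ℝ) {m n : ℕ}

lemma contraction_eq_add (hp₀ : p ≠ 0) (hp₁ : p ≠ 1) (hq₀ : q ≠ 0) (hm : m ≠ 0)
    (a : Fin m → Bool) (b : Fin n → Bool) (t : ℝ) :
    contraction p q l m n a b t =
      (1 - 1 / p) * ∑ k : Fin m, (if a k then (1 / p) ^ (k : ℕ) else 0) -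
        l * ((1 - 1 / q) * ∑ k : Fin n, (if b k then (1 / q) ^ (k : ℕ) else 0)) +
        (1 / p) ^ m * t := by
  have hp₁' : p - 1 ≠ 0 := sub_ne_zero.2 hp₁
  obtain ⟨m, rfl⟩ := Nat.exists_eq_add_one_of_ne_zero hm
  simp only [contraction, coeffA, one_div_pow, ite_div, zero_div, Nat.add_sub_cancel, pow_succ p m]
  field_simp
  ring

lemma contractingWith_contraction (hp : 1 < |p|) (hm : m ≠ 0) (a : Fin m → Bool)
    (b : Fin n → Bool) : ContractingWith ‖(p ^ m)⁻¹‖₊ (contraction p q l m n a b) := by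
  refine ⟨?_, .of_dist_le_mul fun s t ↦ ?_⟩
  · rw [← NNReal.coe_lt_coe, coe_nnnorm, norm_inv, norm_pow]
    exact inv_lt_one_of_one_lt₀ (one_lt_pow₀ hp hm)
  · simp only [contraction, Real.dist_eq, ← mul_sub, sub_sub_sub_cancel_right, abs_mul,
      coe_nnnorm, Real.norm_eq_abs, le_refl]

lemma abs_one_div_lt_one_s1 {x : ℝ} (hx : 1 < |x|) : |1 / x| < 1 := by
  rw [one_div, abs_inv]
  exact inv_lt_one_of_one_lt₀ hx

lemma one_lt_abs_of_pow_eq_pow (hp : 1 < |p|) (hm : m ≠ 0)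
    (hpq : p ^ m = q ^ n) : 1 < |q| := by
  by_contra! hq
  have : |p| ^ m ≤ 1 := by
    rw [← abs_pow, hpq, abs_pow]
    exact pow_le_one₀ (abs_nonneg q) hq
  exact this.not_gt (one_lt_pow₀ hp hm)

lemma contraction_cantorPoint_cutAt (hp : 1 < |p|) (hm : m ≠ 0)
    (hpq : p ^ m = q ^ n) (ε δ : ℕ → Bool) :
    contraction p q l m n (cutAt m ε).1 (cutAt n δ).1
      (cantorPoint (1 / p) (cutAt m ε).2 - l * cantorPoint (1 / q) (cutAt n δ).2) =
      cantorPoint (1 / p) ε - l * cantorPoint (1 / q) δ := by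
  have hq : 1 < |q| := one_lt_abs_of_pow_eq_pow hp hm hpq
  have hp₀ : p ≠ 0 := abs_pos.1 (one_pos.trans hp)
  have hp₁ : p ≠ 1 := by rintro rfl; simp at hp
  have hq₀ : q ≠ 0 := abs_pos.1 (one_pos.trans hq)
  have same_ratio : (1 / p) ^ m = (1 / q) ^ n := by rw [one_div_pow, one_div_pow, hpq]
  rw [contraction_eq_add l hp₀ hp₁ hq₀ hm,
    cantorPoint_eq_add_cantorPoint_cutAt (abs_one_div_lt_one_s1 hp) m ε,
    cantorPoint_eq_add_cantorPoint_cutAt (abs_one_div_lt_one_s1 hq) n δ, same_ratio]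
  ring

theorem isAttractor_diffSet (hp : 1 < |p|) (hm : m ≠ 0) (hpq : p ^ m = q ^ n) :
    IsAttractor (fun w : (Fin m → Bool) × (Fin n → Bool) ↦ contraction p q l m n w.1 w.2)
      (diffSet (1 / p) (1 / q) l) := by
  have hq : 1 < |q| := one_lt_abs_of_pow_eq_pow hp hm hpq
  have coding_continuous : Continuous fun ω : (ℕ → Bool) × (ℕ → Bool) ↦
      cantorPoint (1 / p) ω.1 - l * cantorPoint (1 / q) ω.2 :=
    ((continuous_cantorPoint (abs_one_div_lt_one_s1 hp)).comp continuous_fst).sub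
      (((continuous_cantorPoint (abs_one_div_lt_one_s1 hq)).comp continuous_snd).const_mul l)
  have cut_surjective := (Equiv.prodProdProdComm _ _ _ _).surjective.comp
    ((cutAt_surjective (X := Bool) m).prodMap (cutAt_surjective (X := Bool) n))
  rw [diffSet_eq_range]
  exact isAttractor_range coding_continuous cut_surjective fun ω ↦
    contraction_cantorPoint_cutAt l hp hm hpq ω.1 ω.2

end Contraction

lemma pow_eq_pow_of_log_div_log_eq {x y : ℝ} (hx : 0 < x) (hy : 0 < y) (hy₁ : y ≠ 1) {m n : ℕ}
    (hm : m ≠ 0) (h : Real.log x / Real.log y = n / m) : x ^ m = y ^ n := by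
  rw [div_eq_div_iff (Real.log_ne_zero_of_pos_of_ne_one hy hy₁) (Nat.cast_ne_zero.2 hm)] at h
  apply Real.log_injOn_pos (pow_pos hx m) (pow_pos hy n)
  rw [Real.log_pow, Real.log_pow, mul_comm, h]

theorem stmt1_general {p q : ℝ} (hp : 1 < |p|) {m n : ℕ} (hm : m ≠ 0) (hpq : p ^ m = q ^ n)
    (l : ℝ) :
    ((diffSet (1 / p) (1 / q) l).Nonempty ∧ IsCompact (diffSet (1 / p) (1 / q) l) ∧
      diffSet (1 / p) (1 / q) l =
        ⋃ (a : Fin m → Bool) (b : Fin n → Bool),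
          contraction p q l m n a b '' diffSet (1 / p) (1 / q) l) ∧
    ∀ D : Set ℝ, D.Nonempty → IsCompact D →
      D = (⋃ (a : Fin m → Bool) (b : Fin n → Bool), contraction p q l m n a b '' D) →
      D = diffSet (1 / p) (1 / q) l := by
  have attractor := isAttractor_diffSet l hp hm hpq
  have union_over_pairs (D : Set ℝ) :
      ⋃ w : (Fin m → Bool) × (Fin n → Bool), contraction p q l m n w.1 w.2 '' D =
        ⋃ (a : Fin m → Bool) (b : Fin n → Bool), contraction p q l m n a b '' D :=
    iUnion_prod' _
  refine ⟨⟨attractor.nonempty, attractor.isCompact,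
    attractor.eq_iUnion_image.trans (union_over_pairs _)⟩, fun D hD₀ hDc hD ↦ ?_⟩
  have attractor_D : IsAttractor _ D := ⟨hD₀, hDc, hD.trans (union_over_pairs D).symm⟩
  exact attractor_D.eq attractor fun w ↦ contractingWith_contraction l hp hm w.1 w.2

theorem stmt1 (p q : ℝ) (hp : 2 < p) (hq : 2 < q) (n₀ m₀ : ℕ)
    (hn₀ : 0 < n₀) (hm₀ : 0 < m₀) (hcop : Nat.Coprime n₀ m₀)
    (hratio : Real.log p / Real.log q = (n₀ : ℝ) / (m₀ : ℝ))
    (l : ℝ) (hl : l ≠ 0) :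
    ((diffSet (1 / p) (1 / q) l).Nonempty ∧ IsCompact (diffSet (1 / p) (1 / q) l) ∧
      diffSet (1 / p) (1 / q) l =
        ⋃ (a : Fin m₀ → Bool) (b : Fin n₀ → Bool),
          contraction p q l m₀ n₀ a b '' diffSet (1 / p) (1 / q) l) ∧
    ∀ D : Set ℝ, D.Nonempty → IsCompact D →
      D = (⋃ (a : Fin m₀ → Bool) (b : Fin n₀ → Bool), contraction p q l m₀ n₀ a b '' D) →
      D = diffSet (1 / p) (1 / q) l := by
  have hpq : p ^ m₀ = q ^ n₀ :=
    pow_eq_pow_of_log_div_log_eq (by linarith) (by linarith) (by linarith) hm₀.ne' hratio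
  exact stmt1_general (lt_abs.2 (.inl (by linarith))) hm₀.ne' hpq l
end

section
/- Let a, b > 0 and p₀, p₁, q₀, q₁ > 1 with 1/p₀ + 1/p₁ < 1 and 1/q₀ + 1/q₁ < 1, and let K be the affine Cantor set with two branches and convex hull [0,a] determined by (p₀, p₁), and K′ the one with convex hull [0,b] determined by (q₀, q₁). Define the transferred renormalization operators on (0,∞) × ℝ by T₀(s,t) = (p₀·s, p₀·t), T₁(s,t) = (p₁·s, p₁·t + a(1 − p₁)), T′₀(s,t) = (s/q₀, t), T′₁(s,t) = (s/q₁, t + b·((q₁ − 1)/q₁)·s). If τ(K)·τ(K′) > 1, then there exists a nonempty compact set R ⊆ (0,∞) × ℝ which is recurrent: for every point z ∈ R there is a finite composition of operators from {T₀, T₁, T′₀, T′₁} that maps z into the interior of R. -/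
open Set

/-!
A point `(s, t)` encodes the pair of intervals `I = [0, a]` and `J = [t, t + b s]`, whose length
ratio is `r = b s / a`. The operators `T₀, T₁` replace `I` by one of its two children, rescaling it
to `[0, a]`, while `T'₀, T'₁` replace `J` by one of its children. Let `γ = 1 - 1/p₀ - 1/p₁` and
`γ' = 1 - 1/q₀ - 1/q₁` be the relative gap lengths, `m = min (1/p₀) (1/p₁)` and
`m' = min (1/q₀) (1/q₁)`.

If `I` and `J` overlap, then `J` still overlaps a child of `I` as soon as `γ < r`, and `I` still
overlaps a child of `J` as soon as `γ' r < 1`. The thickness condition `γ γ' < m m'` leaves room for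
a threshold `θ` and a window `[r₁, r₂]` with `γ < r₁ < θ m'`, `θ < r₂ m` and `r₂ γ' < 1`. Hence
subdividing `I` when `r ≤ θ` and `J` when `r ≥ θ` preserves the overlap and moves `r` from
`[r₁, r₂]` into `(r₁, r₂)`.

To land in the interior in the `t` direction too, we require each interval to start at least
`ε (|I| + |J|)` before the other one ends. Subdivision strictly relaxes this requirement at the end
where the overlap is inherited, and for small `ε` the gap argument survives the perturbation. So
one operator always suffices.
-/

section Constants

open Topology

lemma exists_lt_mul_and_mul_lt {x y c d : ℝ} (hd : 0 < d) (h : x * y < c * d) :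
    ∃ r, x < r * d ∧ r * y < c := by
  have hlim : x / d * y < c := by rwa [div_mul_eq_mul_div, div_lt_iff₀ hd]
  have hnear : ∀ᶠ r in 𝓝[>] (x / d), r * y < c :=
    (((continuous_mul_const y).tendsto (x / d)).eventually_lt_const hlim).filter_mono
      nhdsWithin_le_nhds
  obtain ⟨r, hry, hr⟩ := (hnear.and self_mem_nhdsWithin).exists
  exact ⟨r, (div_lt_iff₀ hd).1 hr, hry⟩

lemma exists_threshold_window_margin {γ γ' m m' : ℝ} (hm : 0 < m) (hm' : 0 < m')
    (h : γ * γ' < m * m') :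
    ∃ θ r₁ r₂ ε : ℝ, γ < r₁ ∧ r₁ < θ * m' ∧ θ < r₂ * m ∧ 0 < ε ∧
      2 * ε * (1 + r₂) < r₁ - γ ∧ 2 * ε * (1 + r₂) < 1 - γ' * r₂ := by
  obtain ⟨θ, hγθ, hθm⟩ := exists_lt_mul_and_mul_lt hm' h
  obtain ⟨r₁, hγr₁, hr₁θ⟩ := exists_between hγθ
  obtain ⟨r₂, hθr₂, hr₂γ'⟩ := exists_lt_mul_and_mul_lt (x := θ) (c := 1) hm (by rwa [one_mul])
  have hslack : 0 < min (r₁ - γ) (1 - γ' * r₂) := lt_min (by linarith) (by linarith)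
  obtain ⟨ε, hε, hεlt⟩ := exists_pos_mul_lt hslack (2 * (1 + r₂))
  rw [mul_right_comm, lt_min_iff] at hεlt
  exact ⟨θ, r₁, r₂, ε, hγr₁, hr₁θ, hθr₂, hε, hεlt⟩

lemma posPart_mul_posPart_lt_of_one_lt_div_mul_div {γ γ' m m' : ℝ} (hγ : 0 < γ) (hγ' : 0 < γ')
    (h : 1 < m / γ * (m' / γ')) : γ⁺ * γ'⁺ < m * m' := by
  rwa [div_mul_div_comm, one_lt_div (mul_pos hγ hγ'), ← posPart_of_nonneg hγ.le,
    ← posPart_of_nonneg hγ'.le] at h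

end Constants

/-- How far the intervals `[0, u]` and `[d, d + v]` reach into each other: the smaller of the two
distances from the start of one interval to the end of the other. It is the length of the
intersection when neither interval is nested in the other, and is negative when they are
disjoint. -/
def linkage (u v d : ℝ) : ℝ := min (u - d) (v + d)

lemma linkage_swap (u v d : ℝ) : linkage v u (-d) = linkage u v d := by
  rw [linkage, linkage, sub_neg_eq_add, ← sub_eq_add_neg, min_comm]

lemma linkage_mul {c : ℝ} (hc : 0 ≤ c) (u v d : ℝ) :
    linkage (c * u) (c * v) (c * d) = c * linkage u v d := by
  rw [linkage, linkage, mul_min_of_nonneg _ _ hc, mul_sub, mul_add]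

lemma linkage_centered (u v : ℝ) : linkage u v ((u - v) / 2) = (u + v) / 2 := by
  rw [linkage, show u - (u - v) / 2 = (u + v) / 2 by ring,
    show v + (u - v) / 2 = (u + v) / 2 by ring, min_self]

lemma continuous_linkage {X : Type*} [TopologicalSpace X] {u v d : X → ℝ} (hu : Continuous u)
    (hv : Continuous v) (hd : Continuous d) : Continuous fun x ↦ linkage (u x) (v x) (d x) :=
  (hu.sub hd).min (hv.add hd)

-- If `[0, α₀ u]` fails, then `[d, d + v]` starts near or beyond its end; were `[(1 - α₁) u, u]` to
-- fail as well, `[d, d + v]` would fit into the gap up to a multiple of `ε`, and so be too short.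
lemma lt_linkage_subdivide {ε α₀ α₁ u v d : ℝ} (hε : 0 < ε) (hα₀ : α₀ < 1) (hα₁ : α₁ < 1)
    (hu : 0 < u) (hlink : ε * (u + v) ≤ linkage u v d)
    (hgap : 2 * ε * (u + v) < v - (1 - α₀ - α₁) * u) :
    ε * (α₀ * u + v) < linkage (α₀ * u) v d ∨
      ε * (α₁ * u + v) < linkage (α₁ * u) v (d - (1 - α₁) * u) := by
  obtain ⟨hright, hleft⟩ := le_min_iff.1 hlink
  have hshrink {α : ℝ} (hα : α < 1) : ε * (α * u + v) < ε * (u + v) := by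
    gcongr
    exact mul_lt_of_lt_one_left hu hα
  have h₀ := hshrink hα₀
  have h₁ := hshrink hα₁
  by_cases hstart : ε * (α₀ * u + v) < α₀ * u - d
  · exact .inl (lt_min hstart (h₀.trans_le hleft))
  · exact .inr (lt_min (by linarith) (by linarith))

section LinkedSet

/-- The candidate recurrent set: the `(s, t)` for which the intervals `[0, a]` and `[t, t + b s]`
have length ratio in `[r₁, r₂]` and are linked with margin `ε` relative to their total length. -/
def linkedSet (a b r₁ r₂ ε : ℝ) : Set (ℝ × ℝ) :=
  {z | b * z.1 ∈ Icc (r₁ * a) (r₂ * a) ∧ ε * (a + b * z.1) ≤ linkage a (b * z.1) z.2}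

variable {a b r₁ r₂ ε : ℝ}

lemma mem_interior_linkedSet {z : ℝ × ℝ} (hratio : b * z.1 ∈ Ioo (r₁ * a) (r₂ * a))
    (hlink : ε * (a + b * z.1) < linkage a (b * z.1) z.2) :
    z ∈ interior (linkedSet a b r₁ r₂ ε) := by
  let U : Set (ℝ × ℝ) :=
    {z | b * z.1 ∈ Ioo (r₁ * a) (r₂ * a) ∧ ε * (a + b * z.1) < linkage a (b * z.1) z.2}
  have hU : IsOpen U := (isOpen_Ioo.preimage (by fun_prop)).inter <|
    isOpen_lt (by fun_prop) (continuous_linkage (by fun_prop) (by fun_prop) continuous_snd)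
  have hsub : U ⊆ linkedSet a b r₁ r₂ ε := fun w hw ↦ ⟨Ioo_subset_Icc_self hw.1, hw.2.le⟩
  exact interior_maximal hsub hU ⟨hratio, hlink⟩

lemma linkedSet_subset_Icc_prod_Icc (ha : 0 ≤ a) (hb : 0 < b) (hr₁ : 0 ≤ r₁) (hε : 0 ≤ ε) :
    linkedSet a b r₁ r₂ ε ⊆ Icc (r₁ * a / b) (r₂ * a / b) ×ˢ Icc (-(r₂ * a)) a := by
  rintro ⟨s, t⟩ ⟨⟨hs₁, hs₂⟩, hlink⟩
  have hbs : 0 ≤ b * s := (mul_nonneg hr₁ ha).trans hs₁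
  obtain ⟨hright, hleft⟩ := le_min_iff.1 ((by positivity : 0 ≤ ε * (a + b * s)).trans hlink)
  exact ⟨⟨(div_le_iff₀' hb).2 hs₁, (le_div_iff₀' hb).2 hs₂⟩, by linarith, by linarith⟩

lemma linkedSet_subset_Ioi_prod_univ (ha : 0 < a) (hb : 0 < b) (hr₁ : 0 < r₁) :
    linkedSet a b r₁ r₂ ε ⊆ Ioi 0 ×ˢ univ :=
  fun _ hz ↦ ⟨pos_of_mul_pos_right ((mul_pos hr₁ ha).trans_le hz.1.1) hb.le, mem_univ _⟩

lemma isCompact_linkedSet (ha : 0 ≤ a) (hb : 0 < b) (hr₁ : 0 ≤ r₁) (hε : 0 ≤ ε) :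
    IsCompact (linkedSet a b r₁ r₂ ε) := by
  have hclosed : IsClosed (linkedSet a b r₁ r₂ ε) :=
    (isClosed_Icc.preimage (by fun_prop)).inter <|
      isClosed_le (by fun_prop) (continuous_linkage (by fun_prop) (by fun_prop) continuous_snd)
  exact (isCompact_Icc.prod isCompact_Icc).of_isClosed_subset hclosed
    (linkedSet_subset_Icc_prod_Icc ha hb hr₁ hε)

lemma linkedSet_nonempty (ha : 0 ≤ a) (hb : b ≠ 0) (hr₁ : 0 ≤ r₁) (hr : r₁ ≤ r₂)
    (hε : ε ≤ 1 / 2) : (linkedSet a b r₁ r₂ ε).Nonempty := by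
  refine ⟨(r₁ * a / b, (a - r₁ * a) / 2), ?_⟩
  have hlen : b * (r₁ * a / b) = r₁ * a := mul_div_cancel₀ _ hb
  have hmargin : ε * (a + r₁ * a) ≤ (a + r₁ * a) / 2 := by
    rw [div_eq_inv_mul, ← one_div]
    gcongr
  simp only [linkedSet, mem_ofPred_eq, hlen, linkage_centered]
  exact ⟨left_mem_Icc.2 (by gcongr), hmargin⟩

end LinkedSet

section Subdivision

variable {a b r₁ r₂ θ ε s t : ℝ}

lemma mem_Ioo_of_subdivide_left {α u v : ℝ} (hu : 0 < u) (hα : α < 1) (hr₁ : 0 < r₁)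
    (hθ : θ < r₂ * α) (hv : v ∈ Icc (r₁ * u) (θ * u)) :
    v ∈ Ioo (r₁ * (α * u)) (r₂ * (α * u)) := by
  constructor
  · calc r₁ * (α * u) < r₁ * u := by gcongr; exact mul_lt_of_lt_one_left hu hα
      _ ≤ v := hv.1
  · calc v ≤ θ * u := hv.2
      _ < r₂ * α * u := by gcongr
      _ = r₂ * (α * u) := mul_assoc ..

lemma mem_Ioo_of_subdivide_right {β u v : ℝ} (hu : 0 < u) (hv₀ : 0 < v) (hβ₀ : 0 ≤ β)
    (hβ : β < 1) (hθ : r₁ < θ * β) (hv : v ∈ Icc (θ * u) (r₂ * u)) :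
    β * v ∈ Ioo (r₁ * u) (r₂ * u) := by
  constructor
  · calc r₁ * u < θ * β * u := by gcongr
      _ = β * (θ * u) := by ring
      _ ≤ β * v := by gcongr; exact hv.1
  · calc β * v < v := mul_lt_of_lt_one_left hv₀ hβ
      _ ≤ r₂ * u := hv.2

lemma mem_interior_linkedSet_of_rescale {p d : ℝ} (hp : 0 < p)
    (hratio : b * s ∈ Ioo (r₁ * (1 / p * a)) (r₂ * (1 / p * a)))
    (hlink : ε * (1 / p * a + b * s) < linkage (1 / p * a) (b * s) d) :
    (p * s, p * d) ∈ interior (linkedSet a b r₁ r₂ ε) := by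
  have hlen : p * (1 / p * a) = a := by field_simp
  have hscale (r : ℝ) : p * (r * (1 / p * a)) = r * a := by rw [mul_left_comm, hlen]
  apply mem_interior_linkedSet
  · rw [mul_left_comm, ← hscale r₁, ← hscale r₂]
    exact ⟨mul_lt_mul_of_pos_left hratio.1 hp, mul_lt_mul_of_pos_left hratio.2 hp⟩
  · calc ε * (a + b * (p * s)) = p * (ε * (1 / p * a + b * s)) := by
          linear_combination -ε * hlen
      _ < p * linkage (1 / p * a) (b * s) d := mul_lt_mul_of_pos_left hlink hp
      _ = linkage a (b * (p * s)) (p * d) := by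
          rw [← linkage_mul hp.le, hlen, mul_left_comm p b s]

lemma mem_interior_linkedSet_of_subdivide_left {p₀ p₁ : ℝ} (ha : 0 < a) (hp₀ : 1 < p₀)
    (hp₁ : 1 < p₁) (hr₁ : 0 < r₁) (hθ₀ : θ < r₂ * (1 / p₀)) (hθ₁ : θ < r₂ * (1 / p₁))
    (hε : 0 < ε) (hgap : 2 * ε * (1 + r₂) < r₁ - (1 - 1 / p₀ - 1 / p₁))
    (hz : (s, t) ∈ linkedSet a b r₁ r₂ ε) (hs : b * s ≤ θ * a) :
    (p₀ * s, p₀ * t) ∈ interior (linkedSet a b r₁ r₂ ε) ∨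
      (p₁ * s, p₁ * t + a * (1 - p₁)) ∈ interior (linkedSet a b r₁ r₂ ε) := by
  obtain ⟨⟨hs₁, hs₂⟩, hlink⟩ := hz
  have hα₀ : 1 / p₀ < 1 := (div_lt_one (by linarith)).2 hp₀
  have hα₁ : 1 / p₁ < 1 := (div_lt_one (by linarith)).2 hp₁
  have hgap' : 2 * ε * (a + b * s) < b * s - (1 - 1 / p₀ - 1 / p₁) * a :=
    calc 2 * ε * (a + b * s) ≤ 2 * ε * (a + r₂ * a) := by gcongr
      _ = 2 * ε * (1 + r₂) * a := by ring
      _ < (r₁ - (1 - 1 / p₀ - 1 / p₁)) * a := by gcongr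
      _ = r₁ * a - (1 - 1 / p₀ - 1 / p₁) * a := sub_mul ..
      _ ≤ b * s - (1 - 1 / p₀ - 1 / p₁) * a := by gcongr
  refine (lt_linkage_subdivide hε hα₀ hα₁ ha hlink hgap').imp (fun h₀ ↦ ?_) (fun h₁ ↦ ?_)
  · exact mem_interior_linkedSet_of_rescale (by linarith)
      (mem_Ioo_of_subdivide_left ha hα₀ hr₁ hθ₀ ⟨hs₁, hs⟩) h₀
  · have htrans : p₁ * t + a * (1 - p₁) = p₁ * (t - (1 - 1 / p₁) * a) := by field_simp; ring
    rw [htrans]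
    exact mem_interior_linkedSet_of_rescale (by linarith)
      (mem_Ioo_of_subdivide_left ha hα₁ hr₁ hθ₁ ⟨hs₁, hs⟩) h₁

lemma mem_interior_linkedSet_of_subdivide_right {q₀ q₁ : ℝ} (ha : 0 < a) (hq₀ : 1 < q₀)
    (hq₁ : 1 < q₁) (hr₁ : 0 < r₁) (hθ₀ : r₁ < θ * (1 / q₀)) (hθ₁ : r₁ < θ * (1 / q₁))
    (hε : 0 < ε) (hgap : 2 * ε * (1 + r₂) < 1 - (1 - 1 / q₀ - 1 / q₁)⁺ * r₂)
    (hz : (s, t) ∈ linkedSet a b r₁ r₂ ε) (hs : θ * a ≤ b * s) :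
    (s / q₀, t) ∈ interior (linkedSet a b r₁ r₂ ε) ∨
      (s / q₁, t + b * ((q₁ - 1) / q₁) * s) ∈ interior (linkedSet a b r₁ r₂ ε) := by
  obtain ⟨⟨hs₁, hs₂⟩, hlink⟩ := hz
  have hbs : 0 < b * s := (mul_pos hr₁ ha).trans_le hs₁
  have hβ₀ : 1 / q₀ < 1 := (div_lt_one (by linarith)).2 hq₀
  have hβ₁ : 1 / q₁ < 1 := (div_lt_one (by linarith)).2 hq₁
  have hgap' : 2 * ε * (b * s + a) < a - (1 - 1 / q₀ - 1 / q₁) * (b * s) :=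
    calc 2 * ε * (b * s + a) ≤ 2 * ε * (r₂ * a + a) := by gcongr
      _ = 2 * ε * (1 + r₂) * a := by ring
      _ < (1 - (1 - 1 / q₀ - 1 / q₁)⁺ * r₂) * a := by gcongr
      _ = a - (1 - 1 / q₀ - 1 / q₁)⁺ * (r₂ * a) := by ring
      _ ≤ a - (1 - 1 / q₀ - 1 / q₁)⁺ * (b * s) := by gcongr
      _ ≤ a - (1 - 1 / q₀ - 1 / q₁) * (b * s) := by gcongr; exact le_posPart _
  -- The linkage is symmetric up to the sign of the offset, so `J` is subdivided just like `I`.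
  rw [add_comm, ← linkage_swap] at hlink
  have hlen (q : ℝ) : b * (s / q) = 1 / q * (b * s) := by ring
  refine (lt_linkage_subdivide hε hβ₀ hβ₁ hbs hlink hgap').imp (fun h₀ ↦ ?_) (fun h₁ ↦ ?_)
  · apply mem_interior_linkedSet
    · rw [hlen]
      exact mem_Ioo_of_subdivide_right ha hbs (by positivity) hβ₀ hθ₀ ⟨hs, hs₂⟩
    · rwa [hlen, add_comm, ← linkage_swap]
  · have htrans : -(t + b * ((q₁ - 1) / q₁) * s) = -t - (1 - 1 / q₁) * (b * s) := by
      field_simp; ring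
    apply mem_interior_linkedSet
    · rw [hlen]
      exact mem_Ioo_of_subdivide_right ha hbs (by positivity) hβ₁ hθ₁ ⟨hs, hs₂⟩
    · rwa [hlen, add_comm, ← linkage_swap, htrans]

end Subdivision

/-- The four transferred renormalization operators `T₀, T₁, T'₀, T'₁` of the pair of affine Cantor
sets with convex hulls `[0, a]`, `[0, b]` determined by `(p₀, p₁)` and `(q₀, q₁)`. -/
def transferredOperators (a b p₀ p₁ q₀ q₁ : ℝ) : Set (ℝ × ℝ → ℝ × ℝ) :=
  {fun w ↦ (p₀ * w.1, p₀ * w.2),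
    fun w ↦ (p₁ * w.1, p₁ * w.2 + a * (1 - p₁)),
    fun w ↦ (w.1 / q₀, w.2),
    fun w ↦ (w.1 / q₁, w.2 + b * ((q₁ - 1) / q₁) * w.1)}

-- `hthick` extends the condition `τ(K) τ(K') > 1`, meaningful only for positive gaps, to systems
-- whose branches touch or overlap.
theorem stmt5_general {a b p₀ p₁ q₀ q₁ : ℝ} (ha : 0 < a) (hb : 0 < b)
    (hp₀ : 1 < p₀) (hp₁ : 1 < p₁) (hq₀ : 1 < q₀) (hq₁ : 1 < q₁)
    (hthick : (1 - 1 / p₀ - 1 / p₁)⁺ * (1 - 1 / q₀ - 1 / q₁)⁺ <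
      min (1 / p₀) (1 / p₁) * min (1 / q₀) (1 / q₁)) :
    ∃ R : Set (ℝ × ℝ), R.Nonempty ∧ IsCompact R ∧ R ⊆ Ioi 0 ×ˢ univ ∧
      ∀ z ∈ R, ∃ g ∈ transferredOperators a b p₀ p₁ q₀ q₁, g z ∈ interior R := by
  have hm : 0 < min (1 / p₀) (1 / p₁) := by positivity
  have hm' : 0 < min (1 / q₀) (1 / q₁) := by positivity
  obtain ⟨θ, r₁, r₂, ε, hγr₁, hr₁θ, hθr₂, hε, hgap, hgap'⟩ :=
    exists_threshold_window_margin hm hm' hthick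
  have hr₁ : 0 < r₁ := (posPart_nonneg _).trans_lt hγr₁
  have hθ : 0 < θ := pos_of_mul_pos_left (hr₁.trans hr₁θ) hm'.le
  have hr₂ : 0 < r₂ := pos_of_mul_pos_left (hθ.trans hθr₂) hm.le
  rw [mul_min_of_nonneg _ _ hθ.le, lt_min_iff] at hr₁θ
  rw [mul_min_of_nonneg _ _ hr₂.le, lt_min_iff] at hθr₂
  have hr₁r₂ : r₁ ≤ r₂ :=
    calc r₁ ≤ θ * (1 / q₀) := hr₁θ.1.le
      _ ≤ θ := mul_le_of_le_one_right hθ.le ((div_le_one (by linarith)).2 hq₀.le)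
      _ ≤ r₂ * (1 / p₀) := hθr₂.1.le
      _ ≤ r₂ := mul_le_of_le_one_right hr₂.le ((div_le_one (by linarith)).2 hp₀.le)
  have hε_half : ε ≤ 1 / 2 := by
    have hεr₂ : 0 < ε * r₂ := mul_pos hε hr₂
    have hγ'r₂ := mul_nonneg (posPart_nonneg (1 - 1 / q₀ - 1 / q₁)) hr₂.le
    linarith
  refine ⟨linkedSet a b r₁ r₂ ε, linkedSet_nonempty ha.le hb.ne' hr₁.le hr₁r₂ hε_half,
    isCompact_linkedSet ha.le hb hr₁.le hε.le, linkedSet_subset_Ioi_prod_univ ha hb hr₁, ?_⟩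
  rintro ⟨s, t⟩ hz
  simp only [transferredOperators, exists_mem_insert, mem_singleton_iff, exists_eq_left]
  rcases le_total (b * s) (θ * a) with hs | hs
  · have hgap_left : 2 * ε * (1 + r₂) < r₁ - (1 - 1 / p₀ - 1 / p₁) :=
      hgap.trans_le (sub_le_sub_left (le_posPart _) _)
    have hleft := mem_interior_linkedSet_of_subdivide_left ha hp₀ hp₁ hr₁ hθr₂.1 hθr₂.2 hε
      hgap_left hz hs
    tauto
  · have hright := mem_interior_linkedSet_of_subdivide_right ha hq₀ hq₁ hr₁ hr₁θ.1 hr₁θ.2 hε hgap'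
      hz hs
    tauto

theorem stmt5 (a b p₀ p₁ q₀ q₁ : ℝ) (ha : 0 < a) (hb : 0 < b)
    (hp₀ : 1 < p₀) (hp₁ : 1 < p₁) (hq₀ : 1 < q₀) (hq₁ : 1 < q₁)
    (hpsum : 1 / p₀ + 1 / p₁ < 1) (hqsum : 1 / q₀ + 1 / q₁ < 1)
    -- `K` is the affine Cantor set with convex hull `[0,a]` determined by `(p₀, p₁)`:
    (K : Set ℝ) (hKne : K.Nonempty) (hKc : IsCompact K)
    (hK : K = (fun x => x / p₀) '' K ∪ (fun x => x / p₁ + a * (1 - 1 / p₁)) '' K)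
    -- `K'` is the affine Cantor set with convex hull `[0,b]` determined by `(q₀, q₁)`:
    (K' : Set ℝ) (hK'ne : K'.Nonempty) (hK'c : IsCompact K')
    (hK' : K' = (fun x => x / q₀) '' K' ∪ (fun x => x / q₁ + b * (1 - 1 / q₁)) '' K')
    -- `τ(K) · τ(K') > 1`:
    (hτ : 1 < (min (1 / p₀) (1 / p₁) / (1 - 1 / p₀ - 1 / p₁)) *
            (min (1 / q₀) (1 / q₁) / (1 - 1 / q₀ - 1 / q₁))) :
    ∃ R : Set (ℝ × ℝ), R.Nonempty ∧ IsCompact R ∧ R ⊆ Set.Ioi (0 : ℝ) ×ˢ Set.univ ∧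
      ∀ z ∈ R, ∃ L : List (ℝ × ℝ → ℝ × ℝ), L ≠ [] ∧
        (∀ g ∈ L,
          g = (fun w : ℝ × ℝ => (p₀ * w.1, p₀ * w.2)) ∨
          g = (fun w : ℝ × ℝ => (p₁ * w.1, p₁ * w.2 + a * (1 - p₁))) ∨
          g = (fun w : ℝ × ℝ => (w.1 / q₀, w.2)) ∨
          g = (fun w : ℝ × ℝ => (w.1 / q₁, w.2 + b * ((q₁ - 1) / q₁) * w.1))) ∧
        L.foldl (fun w g => g w) z ∈ interior R := by
  obtain ⟨R, hRne, hRc, hRpos, hR⟩ := stmt5_general ha hb hp₀ hp₁ hq₀ hq₁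
    (posPart_mul_posPart_lt_of_one_lt_div_mul_div (by linarith) (by linarith) hτ)
  exact ⟨R, hRne, hRc, hRpos, fun z hz ↦ let ⟨g, hg, hgz⟩ := hR z hz
    ⟨[g], List.cons_ne_nil _ _, by simpa [transferredOperators] using hg, hgz⟩⟩
end

section
/- Let a, b > 0 and p₀, p₁, q₀, q₁ > 1 with 1/p₀ + 1/p₁ < 1 and 1/q₀ + 1/q₁ < 1, and let K be the affine Cantor set with two branches and convex hull [0,a] determined by (p₀, p₁), and K′ the one with convex hull [0,b] determined by (q₀, q₁). Set G := a(1 − 1/p₀ − 1/p₁) (the gap length of K) and G′ := b(1 − 1/q₀ − 1/q₁) (the gap length of K′). If τ(K)·τ(K′) > 1, then for every real λ with G/b ≤ λ ≤ a/G′, one has K − λ·K′ = [−λ·b, a]. -/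
open Set

/-!
Call `K` and `K'` linked when their hulls meet and neither hull is shorter than the gap of the
other set. The gap of `K` is then too short to swallow the hull of `K'`, so the hull of `K'` meets
the hull of one of the two branches of `K`, and symmetrically. Replacing `K` by that branch keeps
the pair linked provided the branch is not shorter than the gap of `K'`. If this failed both for
`K` and for `K'`, multiplying the two failures would give `τ(K) τ(K') < 1`; hence one of the two
sets can always be replaced.

Iterating, the product of the lengths of the hulls decays geometrically while their ratio stays
bounded, so both lengths tend to `0` and `K`, `K'` contain points arbitrarily close to each other.
By compactness linked sets intersect. Finally `z ∈ K - l • K'` says that `K` meets `z + l • K'`,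
and the bounds on `l` say that these two sets are linked.
-/

open AffineMap (homothety)

theorem inter_nonempty_of_forall_exists_dist_lt {X : Type*} [PseudoMetricSpace X] {s t : Set X}
    (hs : IsCompact s) (ht : IsClosed t) (h : ∀ ε > 0, ∃ x ∈ s, ∃ y ∈ t, dist x y < ε) :
    (s ∩ t).Nonempty := by
  rw [← not_disjoint_iff_nonempty_inter]
  intro hst
  obtain ⟨r, hr, hlt⟩ := Metric.exists_pos_forall_lt_edist hs ht hst
  obtain ⟨x, hx, y, hy, hxy⟩ := h r hr
  refine (hlt x hx y hy).not_ge ?_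
  rw [edist_nndist]
  exact_mod_cast hxy.le

/-- The length of the gap of an affine Cantor set with contraction ratios `α₀`, `α₁`, relative to
the length of its hull. -/
def gapRatio (α₀ α₁ : ℝ) : ℝ := 1 - α₀ - α₁

/-- The thickness `τ` of an affine Cantor set with contraction ratios `α₀`, `α₁`; it does not
depend on the hull. -/
noncomputable def thickness (α₀ α₁ : ℝ) : ℝ := min α₀ α₁ / gapRatio α₀ α₁

/-- `K` is the affine Cantor set with two branches and convex hull `[c, d]` whose branches have
contraction ratios `α₀` and `α₁`. The branch maps are written as the homotheties centred at the
endpoints of the hull, so that the notion is visibly invariant under affine maps. -/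
structure IsAffineCantorSet (α₀ α₁ c d : ℝ) (K : Set ℝ) : Prop where
  left_pos : 0 < α₀
  right_pos : 0 < α₁
  gapRatio_pos : 0 < gapRatio α₀ α₁
  lt : c < d
  nonempty : K.Nonempty
  isCompact : IsCompact K
  eq_union : K = homothety c α₀ '' K ∪ homothety d α₁ '' K

namespace IsAffineCantorSet

variable {α₀ α₁ c d : ℝ} {K : Set ℝ}

theorem of_eq_union_div {a p₀ p₁ : ℝ} (ha : 0 < a) (hp₀ : 0 < p₀) (hp₁ : 0 < p₁)
    (hp : 1 / p₀ + 1 / p₁ < 1) (hne : K.Nonempty) (hc : IsCompact K)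
    (hK : K = (fun x => x / p₀) '' K ∪ (fun x => x / p₁ + a * (1 - 1 / p₁)) '' K) :
    IsAffineCantorSet (1 / p₀) (1 / p₁) 0 a K where
  left_pos := one_div_pos.2 hp₀
  right_pos := one_div_pos.2 hp₁
  gapRatio_pos := by unfold gapRatio; linarith
  lt := ha
  nonempty := hne
  isCompact := hc
  eq_union := by
    have left_branch : ⇑(homothety (0 : ℝ) (1 / p₀)) = fun x => x / p₀ := by
      ext x
      simp [AffineMap.homothety_apply, div_eq_inv_mul]
    have right_branch : ⇑(homothety a (1 / p₁)) = fun x => x / p₁ + a * (1 - 1 / p₁) := by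
      ext x
      simp only [AffineMap.homothety_apply, vsub_eq_sub, smul_eq_mul, vadd_eq_add]
      ring
    rwa [left_branch, right_branch]

theorem left_lt_one (hK : IsAffineCantorSet α₀ α₁ c d K) : α₀ < 1 := by
  have := hK.gapRatio_pos
  unfold gapRatio at this
  linarith [hK.right_pos]

theorem right_lt_one (hK : IsAffineCantorSet α₀ α₁ c d K) : α₁ < 1 := by
  have := hK.gapRatio_pos
  unfold gapRatio at this
  linarith [hK.left_pos]

theorem gapRatio_lt_one (hK : IsAffineCantorSet α₀ α₁ c d K) : gapRatio α₀ α₁ < 1 := by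
  unfold gapRatio
  linarith [hK.left_pos, hK.right_pos]

theorem min_pos (hK : IsAffineCantorSet α₀ α₁ c d K) : 0 < min α₀ α₁ :=
  lt_min hK.left_pos hK.right_pos

theorem subset_Icc (hK : IsAffineCantorSet α₀ α₁ c d K) : K ⊆ Icc c d := by
  have exists_preimage : ∀ x ∈ K, ∃ y ∈ K, x = α₀ * (y - c) + c ∨ x = α₁ * (y - d) + d := by
    intro x hx
    rw [hK.eq_union] at hx
    obtain ⟨y, hy, rfl⟩ | ⟨y, hy, rfl⟩ := hx
    · exact ⟨y, hy, .inl rfl⟩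
    · exact ⟨y, hy, .inr rfl⟩
  obtain ⟨m, hm, hmin⟩ := hK.isCompact.exists_isLeast hK.nonempty
  obtain ⟨M, hM, hmax⟩ := hK.isCompact.exists_isGreatest hK.nonempty
  have := hK.left_pos
  have := hK.right_pos
  have := hK.left_lt_one
  have := hK.right_lt_one
  have := hK.lt
  -- The least point is the image of a point on its right under a contraction towards `c` or `d`,
  -- so it cannot lie to the left of `c`; symmetrically for the greatest point.
  have hm' : c ≤ m := by
    obtain ⟨y, hy, h | h⟩ := exists_preimage m hm <;> have := hmin hy <;> nlinarith
  have hM' : M ≤ d := by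
    obtain ⟨y, hy, h | h⟩ := exists_preimage M hM <;> have := hmax hy <;> nlinarith
  exact fun x hx => ⟨hm'.trans (hmin hx), (hmax hx).trans hM'⟩

theorem image (hK : IsAffineCantorSet α₀ α₁ c d K) (f : ℝ →ᵃ[ℝ] ℝ) (hf : f c < f d) :
    IsAffineCantorSet α₀ α₁ (f c) (f d) (f '' K) where
  left_pos := hK.left_pos
  right_pos := hK.right_pos
  gapRatio_pos := hK.gapRatio_pos
  lt := hf
  nonempty := hK.nonempty.image f
  isCompact := hK.isCompact.image f.continuous_of_finiteDimensional
  eq_union := by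
    have hcomm (p α x : ℝ) : f (homothety p α x) = homothety (f p) α (f x) := by
      simp only [AffineMap.homothety_eq_lineMap, AffineMap.apply_lineMap]
    conv_lhs => rw [hK.eq_union]
    rw [image_union, image_comm (hcomm c α₀), image_comm (hcomm d α₁)]

theorem exists_left_branch (hK : IsAffineCantorSet α₀ α₁ c d K) :
    ∃ K₁ ⊆ K, IsAffineCantorSet α₀ α₁ c (c + α₀ * (d - c)) K₁ := by
  have hc : homothety c α₀ c = c := AffineMap.homothety_apply_same c α₀
  have hd : homothety c α₀ d = c + α₀ * (d - c) := add_comm _ _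
  refine ⟨homothety c α₀ '' K, subset_union_left.trans hK.eq_union.superset, ?_⟩
  simpa only [hc, hd] using hK.image (homothety c α₀)
    (by rw [hc, hd]; linarith [mul_pos hK.left_pos (sub_pos.2 hK.lt)])

theorem exists_right_branch (hK : IsAffineCantorSet α₀ α₁ c d K) :
    ∃ K₁ ⊆ K, IsAffineCantorSet α₀ α₁ (d - α₁ * (d - c)) d K₁ := by
  have hc : homothety d α₁ c = d - α₁ * (d - c) := by
    simp only [AffineMap.homothety_apply, vsub_eq_sub, smul_eq_mul, vadd_eq_add]
    ring
  have hd : homothety d α₁ d = d := AffineMap.homothety_apply_same d α₁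
  refine ⟨homothety d α₁ '' K, subset_union_right.trans hK.eq_union.superset, ?_⟩
  simpa only [hc, hd] using hK.image (homothety d α₁)
    (by rw [hc, hd]; linarith [mul_pos hK.right_pos (sub_pos.2 hK.lt)])

end IsAffineCantorSet

/-- Two affine Cantor sets `K` and `K'` with hulls `[c, d]` and `[c', d']` are linked when the hulls
meet and neither hull is shorter than the gap of the other set. -/
structure LinkedCantorSets (α₀ α₁ β₀ β₁ c d : ℝ) (K : Set ℝ) (c' d' : ℝ) (K' : Set ℝ) : Prop where
  fst : IsAffineCantorSet α₀ α₁ c d K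
  snd : IsAffineCantorSet β₀ β₁ c' d' K'
  left_le_right : c ≤ d'
  left_le_right' : c' ≤ d
  gap_le : gapRatio α₀ α₁ * (d - c) ≤ d' - c'
  gap_le' : gapRatio β₀ β₁ * (d' - c') ≤ d - c

namespace LinkedCantorSets

variable {α₀ α₁ β₀ β₁ c d c' d' : ℝ} {K K' : Set ℝ}

theorem symm (h : LinkedCantorSets α₀ α₁ β₀ β₁ c d K c' d' K') :
    LinkedCantorSets β₀ β₁ α₀ α₁ c' d' K' c d K :=
  ⟨h.snd, h.fst, h.left_le_right', h.left_le_right, h.gap_le', h.gap_le⟩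

theorem exists_subset_left (h : LinkedCantorSets α₀ α₁ β₀ β₁ c d K c' d' K')
    (hgap : gapRatio β₀ β₁ * (d' - c') ≤ min α₀ α₁ * (d - c)) :
    ∃ c₁ d₁, ∃ K₁ ⊆ K, LinkedCantorSets α₀ α₁ β₀ β₁ c₁ d₁ K₁ c' d' K' ∧
      d₁ - c₁ ≤ max α₀ α₁ * (d - c) := by
  have hlen : 0 < d - c := sub_pos.2 h.fst.lt
  have gap_le_of_lt_one {α : ℝ} (hα : α < 1) :
      gapRatio α₀ α₁ * (α * (d - c)) ≤ d' - c' :=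
    calc gapRatio α₀ α₁ * (α * (d - c)) ≤ gapRatio α₀ α₁ * (1 * (d - c)) := by
          gcongr
          exact h.fst.gapRatio_pos.le
      _ ≤ d' - c' := by simpa only [one_mul] using h.gap_le
  have gap_le_of_min_le {α : ℝ} (hα : min α₀ α₁ ≤ α) :
      gapRatio β₀ β₁ * (d' - c') ≤ α * (d - c) :=
    hgap.trans (by gcongr)
  rcases le_total c' (c + α₀ * (d - c)) with hmeet | hmiss
  · obtain ⟨K₁, hK₁, hcantor⟩ := h.fst.exists_left_branch
    have hlen₁ : c + α₀ * (d - c) - c = α₀ * (d - c) := by ring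
    refine ⟨_, _, K₁, hK₁, ⟨hcantor, h.snd, h.left_le_right, hmeet, ?_, ?_⟩, ?_⟩ <;> rw [hlen₁]
    · exact gap_le_of_lt_one h.fst.left_lt_one
    · exact gap_le_of_min_le (min_le_left _ _)
    · gcongr
      exact le_max_left _ _
  · obtain ⟨K₁, hK₁, hcantor⟩ := h.fst.exists_right_branch
    have hlen₁ : d - (d - α₁ * (d - c)) = α₁ * (d - c) := by ring
    have hmeet : d - α₁ * (d - c) ≤ d' :=
      calc d - α₁ * (d - c) = c + α₀ * (d - c) + gapRatio α₀ α₁ * (d - c) := by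
            unfold gapRatio
            ring
        _ ≤ c' + (d' - c') := add_le_add hmiss h.gap_le
        _ = d' := by ring
    refine ⟨_, _, K₁, hK₁, ⟨hcantor, h.snd, hmeet, h.left_le_right', ?_, ?_⟩, ?_⟩ <;> rw [hlen₁]
    · exact gap_le_of_lt_one h.fst.right_lt_one
    · exact gap_le_of_min_le (min_le_right _ _)
    · gcongr
      exact le_max_right _ _

theorem gap_le_min_or_gap_le_min (h : LinkedCantorSets α₀ α₁ β₀ β₁ c d K c' d' K')
    (hτ : 1 ≤ thickness α₀ α₁ * thickness β₀ β₁) :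
    gapRatio β₀ β₁ * (d' - c') ≤ min α₀ α₁ * (d - c) ∨
      gapRatio α₀ α₁ * (d - c) ≤ min β₀ β₁ * (d' - c') := by
  have hγ := h.fst.gapRatio_pos
  have hγ' := h.snd.gapRatio_pos
  have hlen : 0 < d - c := sub_pos.2 h.fst.lt
  have hlen' : 0 < d' - c' := sub_pos.2 h.snd.lt
  rw [thickness, thickness, div_mul_div_comm, one_le_div (mul_pos hγ hγ')] at hτ
  by_contra! hshort
  have hmin := h.fst.min_pos
  have hmin' := h.snd.min_pos
  refine lt_irrefl (gapRatio α₀ α₁ * gapRatio β₀ β₁ * ((d - c) * (d' - c'))) ?_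
  calc gapRatio α₀ α₁ * gapRatio β₀ β₁ * ((d - c) * (d' - c'))
      ≤ min α₀ α₁ * min β₀ β₁ * ((d - c) * (d' - c')) := by gcongr
    _ = (min α₀ α₁ * (d - c)) * (min β₀ β₁ * (d' - c')) := by ring
    _ < (gapRatio β₀ β₁ * (d' - c')) * (gapRatio α₀ α₁ * (d - c)) :=
      mul_lt_mul'' hshort.1 hshort.2 (by positivity) (by positivity)
    _ = gapRatio α₀ α₁ * gapRatio β₀ β₁ * ((d - c) * (d' - c')) := by ring

theorem exists_subset (h : LinkedCantorSets α₀ α₁ β₀ β₁ c d K c' d' K')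
    (hτ : 1 ≤ thickness α₀ α₁ * thickness β₀ β₁) :
    ∃ c₁ d₁, ∃ K₁ ⊆ K, ∃ c₁' d₁', ∃ K₁' ⊆ K',
      LinkedCantorSets α₀ α₁ β₀ β₁ c₁ d₁ K₁ c₁' d₁' K₁' ∧
      (d₁ - c₁) * (d₁' - c₁') ≤ max (max α₀ α₁) (max β₀ β₁) * ((d - c) * (d' - c')) := by
  have hlen : 0 < d - c := sub_pos.2 h.fst.lt
  have hlen' : 0 < d' - c' := sub_pos.2 h.snd.lt
  rcases h.gap_le_min_or_gap_le_min hτ with hgap | hgap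
  · obtain ⟨c₁, d₁, K₁, hK₁, h₁, hle⟩ := h.exists_subset_left hgap
    refine ⟨c₁, d₁, K₁, hK₁, c', d', K', subset_rfl, h₁, ?_⟩
    calc (d₁ - c₁) * (d' - c') ≤ max α₀ α₁ * (d - c) * (d' - c') := by gcongr
      _ = max α₀ α₁ * ((d - c) * (d' - c')) := by ring
      _ ≤ _ := by
        gcongr ?_ * _
        exact le_max_left _ _
  · obtain ⟨c₁', d₁', K₁', hK₁', h₁, hle⟩ := h.symm.exists_subset_left hgap
    refine ⟨c, d, K, subset_rfl, c₁', d₁', K₁', hK₁', h₁.symm, ?_⟩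
    calc (d - c) * (d₁' - c₁') ≤ (d - c) * (max β₀ β₁ * (d' - c')) := by gcongr
      _ = max β₀ β₁ * ((d - c) * (d' - c')) := by ring
      _ ≤ _ := by
        gcongr ?_ * _
        exact le_max_right _ _

theorem exists_subset_pow (h : LinkedCantorSets α₀ α₁ β₀ β₁ c d K c' d' K')
    (hτ : 1 ≤ thickness α₀ α₁ * thickness β₀ β₁) (n : ℕ) :
    ∃ c₁ d₁, ∃ K₁ ⊆ K, ∃ c₁' d₁', ∃ K₁' ⊆ K',
      LinkedCantorSets α₀ α₁ β₀ β₁ c₁ d₁ K₁ c₁' d₁' K₁' ∧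
      (d₁ - c₁) * (d₁' - c₁') ≤ max (max α₀ α₁) (max β₀ β₁) ^ n * ((d - c) * (d' - c')) := by
  induction n with
  | zero => exact ⟨c, d, K, subset_rfl, c', d', K', subset_rfl, h, by rw [pow_zero, one_mul]⟩
  | succ n ih =>
    obtain ⟨c₁, d₁, K₁, hK₁, c₁', d₁', K₁', hK₁', h₁, hle₁⟩ := ih
    obtain ⟨c₂, d₂, K₂, hK₂, c₂', d₂', K₂', hK₂', h₂, hle₂⟩ := h₁.exists_subset hτ
    refine ⟨c₂, d₂, K₂, hK₂.trans hK₁, c₂', d₂', K₂', hK₂'.trans hK₁', h₂, hle₂.trans ?_⟩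
    have hpos : 0 ≤ max (max α₀ α₁) (max β₀ β₁) :=
      le_max_of_le_left (le_max_of_le_left h.fst.left_pos.le)
    rw [pow_succ', mul_assoc]
    gcongr

theorem sq_sub_le (h : LinkedCantorSets α₀ α₁ β₀ β₁ c d K c' d' K') {x y : ℝ} (hx : x ∈ K)
    (hy : y ∈ K') :
    gapRatio α₀ α₁ * gapRatio β₀ β₁ * (x - y) ^ 2 ≤ 4 * ((d - c) * (d' - c')) := by
  have hγ := h.fst.gapRatio_pos
  have hγ' := h.snd.gapRatio_pos
  have hlen : 0 < d - c := sub_pos.2 h.fst.lt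
  have hlen' : 0 < d' - c' := sub_pos.2 h.snd.lt
  obtain ⟨hcx, hxd⟩ := h.fst.subset_Icc hx
  obtain ⟨hcy, hyd⟩ := h.snd.subset_Icc hy
  have hsq : (x - y) ^ 2 ≤ ((d - c) + (d' - c')) ^ 2 :=
    sq_le_sq' (by linarith [h.left_le_right']) (by linarith [h.left_le_right])
  set γ := gapRatio α₀ α₁
  set γ' := gapRatio β₀ β₁
  set L := d - c
  set L' := d' - c'
  calc γ * γ' * (x - y) ^ 2 ≤ γ * γ' * (L + L') ^ 2 := by gcongr
    _ = γ' * ((γ * L) * L) + γ * ((γ' * L') * L') + 2 * (γ * γ') * (L * L') := by ring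
    _ ≤ 1 * (L' * L) + 1 * (L * L') + 2 * (1 * 1) * (L * L') := by
      gcongr
      exacts [h.snd.gapRatio_lt_one.le, h.gap_le, h.fst.gapRatio_lt_one.le, h.gap_le',
        h.fst.gapRatio_lt_one.le, h.snd.gapRatio_lt_one.le]
    _ = 4 * (L * L') := by ring

theorem exists_sq_sub_le (h : LinkedCantorSets α₀ α₁ β₀ β₁ c d K c' d' K')
    (hτ : 1 ≤ thickness α₀ α₁ * thickness β₀ β₁) (n : ℕ) :
    ∃ x ∈ K, ∃ y ∈ K', gapRatio α₀ α₁ * gapRatio β₀ β₁ * (x - y) ^ 2 ≤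
      4 * (max (max α₀ α₁) (max β₀ β₁) ^ n * ((d - c) * (d' - c'))) := by
  obtain ⟨c₁, d₁, K₁, hK₁, c₁', d₁', K₁', hK₁', h₁, hle⟩ := h.exists_subset_pow hτ n
  obtain ⟨x, hx⟩ := h₁.fst.nonempty
  obtain ⟨y, hy⟩ := h₁.snd.nonempty
  exact ⟨x, hK₁ hx, y, hK₁' hy, (h₁.sq_sub_le hx hy).trans (by gcongr)⟩

theorem inter_nonempty (h : LinkedCantorSets α₀ α₁ β₀ β₁ c d K c' d' K')
    (hτ : 1 ≤ thickness α₀ α₁ * thickness β₀ β₁) : (K ∩ K').Nonempty := by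
  refine inter_nonempty_of_forall_exists_dist_lt h.fst.isCompact h.snd.isCompact.isClosed ?_
  intro ε hε
  have hγγ' : 0 < gapRatio α₀ α₁ * gapRatio β₀ β₁ :=
    mul_pos h.fst.gapRatio_pos h.snd.gapRatio_pos
  have hr₀ : 0 ≤ max (max α₀ α₁) (max β₀ β₁) :=
    le_max_of_le_left (le_max_of_le_left h.fst.left_pos.le)
  have hr₁ : max (max α₀ α₁) (max β₀ β₁) < 1 :=
    max_lt (max_lt h.fst.left_lt_one h.fst.right_lt_one)
      (max_lt h.snd.left_lt_one h.snd.right_lt_one)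
  have hlim := ((tendsto_pow_atTop_nhds_zero_of_lt_one hr₀ hr₁).mul_const
    ((d - c) * (d' - c'))).const_mul 4
  rw [zero_mul, mul_zero] at hlim
  obtain ⟨n, hn⟩ := (hlim.eventually_lt_const (mul_pos hγγ' (pow_pos hε 2))).exists
  obtain ⟨x, hx, y, hy, hxy⟩ := h.exists_sq_sub_le hτ n
  exact ⟨x, hx, y, hy, abs_lt_of_sq_lt_sq (lt_of_mul_lt_mul_left (hxy.trans_lt hn) hγγ'.le) hε.le⟩

end LinkedCantorSets

theorem stmt6_general {α₀ α₁ β₀ β₁ c d c' d' l : ℝ} {K K' : Set ℝ}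
    (hK : IsAffineCantorSet α₀ α₁ c d K) (hK' : IsAffineCantorSet β₀ β₁ c' d' K')
    (hτ : 1 ≤ thickness α₀ α₁ * thickness β₀ β₁)
    (hl₁ : (d - c) * gapRatio α₀ α₁ / (d' - c') ≤ l)
    (hl₂ : l ≤ (d - c) / ((d' - c') * gapRatio β₀ β₁)) :
    {z : ℝ | ∃ x ∈ K, ∃ y ∈ K', z = x - l * y} = Icc (c - l * d') (d - l * c') := by
  have hlen : 0 < d - c := sub_pos.2 hK.lt
  have hlen' : 0 < d' - c' := sub_pos.2 hK'.lt
  have hl : 0 < l := (div_pos (mul_pos hlen hK.gapRatio_pos) hlen').trans_le hl₁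
  rw [div_le_iff₀ hlen'] at hl₁
  rw [le_div_iff₀ (mul_pos hlen' hK'.gapRatio_pos)] at hl₂
  apply Subset.antisymm
  · rintro _ ⟨x, hx, y, hy, rfl⟩
    obtain ⟨hcx, hxd⟩ := hK.subset_Icc hx
    obtain ⟨hcy, hyd⟩ := hK'.subset_Icc hy
    exact ⟨by gcongr, by gcongr⟩
  · rintro z ⟨hz₁, hz₂⟩
    let f : ℝ →ᵃ[ℝ] ℝ := AffineMap.const ℝ ℝ z + l • AffineMap.id ℝ ℝ
    have hf (y : ℝ) : f y = z + l * y := rfl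
    have hlinked : LinkedCantorSets α₀ α₁ β₀ β₁ c d K (f c') (f d') (f '' K') :=
      { fst := hK
        snd := hK'.image f (by rw [hf, hf]; gcongr; exact hK'.lt)
        left_le_right := by rw [hf]; linarith
        left_le_right' := by rw [hf]; linarith
        gap_le := by rw [hf, hf]; linarith
        gap_le' := by rw [hf, hf]; linarith }
    obtain ⟨_, hx, y, hy, rfl⟩ := hlinked.inter_nonempty hτ
    exact ⟨_, hx, y, hy, by rw [hf]; ring⟩

theorem stmt6 (a b p₀ p₁ q₀ q₁ : ℝ) (ha : 0 < a) (hb : 0 < b)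
    (hp₀ : 1 < p₀) (hp₁ : 1 < p₁) (hq₀ : 1 < q₀) (hq₁ : 1 < q₁)
    (hpsum : 1 / p₀ + 1 / p₁ < 1) (hqsum : 1 / q₀ + 1 / q₁ < 1)
    -- `K` is the affine Cantor set with convex hull `[0,a]` determined by `(p₀, p₁)`:
    (K : Set ℝ) (hKne : K.Nonempty) (hKc : IsCompact K)
    (hK : K = (fun x => x / p₀) '' K ∪ (fun x => x / p₁ + a * (1 - 1 / p₁)) '' K)
    -- `K'` is the affine Cantor set with convex hull `[0,b]` determined by `(q₀, q₁)`:
    (K' : Set ℝ) (hK'ne : K'.Nonempty) (hK'c : IsCompact K')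
    (hK' : K' = (fun x => x / q₀) '' K' ∪ (fun x => x / q₁ + b * (1 - 1 / q₁)) '' K')
    -- `τ(K) · τ(K') > 1`:
    (hτ : 1 < (min (1 / p₀) (1 / p₁) / (1 - 1 / p₀ - 1 / p₁)) *
            (min (1 / q₀) (1 / q₁) / (1 - 1 / q₀ - 1 / q₁)))
    (l : ℝ)
    (hl₁ : a * (1 - 1 / p₀ - 1 / p₁) / b ≤ l)
    (hl₂ : l ≤ a / (b * (1 - 1 / q₀ - 1 / q₁))) :
    {z : ℝ | ∃ x ∈ K, ∃ y ∈ K', z = x - l * y} = Set.Icc (-(l * b)) a := by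
  have hCantor := IsAffineCantorSet.of_eq_union_div ha (by positivity) (by positivity) hpsum hKne
    hKc hK
  have hCantor' := IsAffineCantorSet.of_eq_union_div hb (by positivity) (by positivity) hqsum hK'ne
    hK'c hK'
  simpa only [sub_zero, zero_sub, mul_zero] using stmt6_general hCantor hCantor' hτ.le
    (by rwa [sub_zero, sub_zero]) (by rwa [sub_zero, sub_zero])
end
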